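/- Let h : (0,∞)² → ℝ be continuous and piecewise generalized polynomial. Then there exist L ∈ ℕ, real numbers 0 = γ_0 < γ_1 < … < γ_L < γ_{L+1} = ∞, and functions d_0, d_1, …, d_L : (0,∞)² → ℝ, each a pointwise supremum of infima of finitely many generalized polynomial functions, such that for each p ∈ {0,…,L}, d_p coincides with h on the vertical half-strip H_p := (γ_p, γ_{p+1}) × (0,∞). -/

import Mathlib

open Set

noncomputable section

/-- The open positive quadrant `(0,∞)²`, as a subtype of `ℝ × ℝ`. -/
abbrev PQ : Type := {p : ℝ × ℝ // 0 < p.1 ∧ 0 < p.2}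

/-- A generalized polynomial function (signomial) of two variables: a finite sum
`∑ cᵢ x^{αᵢ₁} y^{αᵢ₂}` with nonzero real coefficients and distinct real exponent pairs. -/
def IsGenPoly (a : PQ → ℝ) : Prop :=
  ∃ (m : ℕ) (c : Fin m → ℝ) (α : Fin m → ℝ × ℝ),
    (∀ i, c i ≠ 0) ∧ Function.Injective α ∧
    ∀ p : PQ, a p = ∑ i, c i * p.1.1 ^ (α i).1 * p.1.2 ^ (α i).2

/-- A basic generalized semialgebraic (semisignomial) subset of `(0,∞)²`. -/
def IsBasicGSA (S : Set PQ) : Prop :=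
  ∃ (f : PQ → ℝ) (K : ℕ) (g : Fin K → PQ → ℝ),
    IsGenPoly f ∧ (∀ k, IsGenPoly (g k)) ∧
    S = {p : PQ | f p = 0 ∧ ∀ k, 0 < g k p}

/-- A generalized semialgebraic set: a finite union of basic ones. -/
def IsGSA (S : Set PQ) : Prop :=
  ∃ (J : ℕ) (T : Fin J → Set PQ), (∀ j, IsBasicGSA (T j)) ∧ S = ⋃ j, T j

/-- `h` is piecewise generalized polynomial: there are finitely many *distinct*
generalized polynomial functions `g i` whose agreement sets with `h` are
generalized semialgebraic and cover `(0,∞)²`. -/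
def IsPiecewiseGenPoly (h : PQ → ℝ) : Prop :=
  ∃ (l : ℕ) (g : Fin l → PQ → ℝ),
    (∀ i, IsGenPoly (g i)) ∧ Function.Injective g ∧
    (∀ i, IsGSA {p : PQ | h p = g i p}) ∧
    ∀ p : PQ, ∃ i, h p = g i p

/-- `h` is a pointwise sup of infs of finitely many generalized polynomial functions. -/
def IsSupInf (h : PQ → ℝ) : Prop :=
  ∃ (J : ℕ) (K : Fin (J + 1) → ℕ)
    (f : (j : Fin (J + 1)) → Fin (K j + 1) → PQ → ℝ),
    (∀ j k, IsGenPoly (f j k)) ∧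
    ∀ p : PQ, h p = ⨆ j, ⨅ k, f j k p

/-- The `p`-th interval of the subdivision `0 = γ 0 < γ 1 < … < γ L < γ (L+1) = ∞`
of `(0,∞)`: it is `(γ p, γ (p+1))` for `p < L` and `(γ L, ∞)` for `p = L`. -/
def vstrip (γ : ℕ → ℝ) (L p : ℕ) : Set ℝ :=
  if p = L then Set.Ioi (γ p) else Set.Ioo (γ p) (γ (p + 1))

/-!
Write a generalized polynomial as `f (x, y) = ∑ c_β(x) y ^ β`. Dividing by the lowest power of `y`
and differentiating removes one term, so Rolle's argument, iterated along this tower of Euler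
derivatives, shows that a zero of `f` between `(x, z)` and `(x, y)` forces `|f (x, y)|` to be at
most a generalized polynomial in `(x, y)`, a *bridge*, which depends on `z` only through the signs
of the tower at `(x, z)`. The bridge is nonnegative if its upper signs are the true ones at
`(x, y)`, and nonpositive if its lower signs are. A continuous `h` switches between its pieces only
at zeros of their differences; hence, if `k` ranges over the sign types of the points of a fibre and
`g_k` is the piece valid at points of type `k`, then
`h = sup_k inf_k' (g_k - (bridges from type k to type k'))`.

This formula is valid over every interval of abscissas on which the set of sign types of a fibre is
constant. At each end `x → 0⁺`, `x → ∞`, `x → x₀⁺`, `x → x₀⁻` the coefficients are generalized power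
series, and a Weierstrass division along the zeros of `f` shows that, in a punctured one-sided
neighbourhood of the end, common zeros of two members of a finite family persist along the zeros of
the first. Together with Rolle's theorem this makes the set of sign types locally constant there,
and compactness leaves finitely many exceptional abscissas.
-/

/-! ### Rolle-type bounds for power towers -/

section RolleBounds

lemma le_add_of_deriv_le_rpow {g g' : ℝ → ℝ} {b B t₁ t₂ y : ℝ} (hb : 0 < b) (hB : 0 ≤ B)
    (h₁ : 0 < t₁) (h₁₂ : t₁ ≤ t₂) (h₂ : t₂ ≤ y)
    (hd : ∀ t, 0 < t → HasDerivAt g (t ^ (b - 1) * g' t) t) (hg : ∀ t ∈ Icc t₁ t₂, g' t ≤ B) :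
    g t₂ ≤ g t₁ + y ^ b / b * B := by
  have hd' : ∀ t, 0 < t →
      HasDerivAt (fun t ↦ B * t ^ b / b - g t) (t ^ (b - 1) * (B - g' t)) t := by
    intro t ht
    refine ((((Real.hasDerivAt_rpow_const (p := b) (Or.inl ht.ne')).const_mul B).div_const b).sub
      (hd t ht)).congr_deriv ?_
    field_simp
  have hmono : MonotoneOn (fun t ↦ B * t ^ b / b - g t) (Icc t₁ t₂) := by
    refine monotoneOn_of_deriv_nonneg (convex_Icc _ _)
      (fun t ht ↦ (hd' t (h₁.trans_le ht.1)).continuousAt.continuousWithinAt) ?_ ?_ <;>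
    rw [interior_Icc] <;> intro t ht
    · exact (hd' t (h₁.trans ht.1)).differentiableAt.differentiableWithinAt
    · rw [(hd' t (h₁.trans ht.1)).deriv]
      exact mul_nonneg (Real.rpow_nonneg (h₁.trans ht.1).le _)
        (sub_nonneg.2 (hg t (Ioo_subset_Icc_self ht)))
  have h : B * t₁ ^ b / b - g t₁ ≤ B * t₂ ^ b / b - g t₂ :=
    hmono (left_mem_Icc.2 h₁₂) (right_mem_Icc.2 h₁₂) h₁₂
  have hlow : 0 ≤ B * t₁ ^ b / b := by positivity
  have hup : B * t₂ ^ b / b ≤ y ^ b / b * B := by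
    rw [div_mul_eq_mul_div, mul_comm]
    gcongr
    exact h₁.le.trans h₁₂
  linarith

/-- The cost of moving from a point where a function has sign `σ` to a point where it has sign `τ`
and value `v`: nothing if the signs agree, and `|v|` otherwise. It is written as `τ * v` so that,
for fixed signs, it is linear in `v`. -/
def signCost (σ τ : SignType) (v : ℝ) : ℝ := if σ = τ then 0 else τ * v

lemma signCost_neg (σ τ : SignType) (v : ℝ) : signCost (-σ) (-τ) (-v) = signCost σ τ v := by
  simp [signCost]

lemma signCost_sign_right_nonneg (σ : SignType) (v : ℝ) : 0 ≤ signCost σ (SignType.sign v) v := by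
  unfold signCost
  split_ifs
  · rfl
  · simp [sign_mul_self]

lemma signCost_sign_left_nonpos (τ : SignType) (v : ℝ) : signCost (SignType.sign v) τ v ≤ 0 := by
  unfold signCost
  split_ifs with h
  · rfl
  · rcases lt_trichotomy v 0 with hv | rfl | hv
    · rw [sign_neg hv] at h
      cases τ <;> simp_all [hv.le]
    · simp
    · rw [sign_pos hv] at h
      cases τ <;> simp_all [hv.le]

lemma signCost_of_ne {σ : SignType} {v : ℝ} (h : σ ≠ SignType.sign v) :
    signCost σ (SignType.sign v) v = |v| := by
  rw [signCost, if_neg h, sign_mul_self]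

/-- The weighted total `∑ (w 0 ⋯ w (l - 1)) * signCost (σ l) (τ l) (v l)` of the sign costs of the
first `n` members of a tower of functions. -/
def towerCost (n : ℕ) (w : ℕ → ℝ) (σ τ : ℕ → SignType) (v : ℕ → ℝ) : ℝ :=
  ∑ l ∈ Finset.range n, (∏ k ∈ Finset.range l, w k) * signCost (σ l) (τ l) (v l)

lemma towerCost_succ (n : ℕ) (w : ℕ → ℝ) (σ τ : ℕ → SignType) (v : ℕ → ℝ) :
    towerCost (n + 1) w σ τ v = signCost (σ 0) (τ 0) (v 0) + w 0 *
      towerCost n (fun l ↦ w (l + 1)) (fun l ↦ σ (l + 1)) (fun l ↦ τ (l + 1))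
        (fun l ↦ v (l + 1)) := by
  simp only [towerCost, Finset.sum_range_succ', Finset.prod_range_succ', Finset.mul_sum]
  simp only [Finset.range_zero, Finset.prod_empty, one_mul, add_comm]
  congr 1
  exact Finset.sum_congr rfl fun _ _ ↦ by ring

lemma towerCost_nonneg {w : ℕ → ℝ} (hw : ∀ l, 0 ≤ w l) (n : ℕ) (σ : ℕ → SignType) (v : ℕ → ℝ) :
    0 ≤ towerCost n w σ (fun l ↦ SignType.sign (v l)) v :=
  Finset.sum_nonneg fun _ _ ↦
    mul_nonneg (Finset.prod_nonneg fun k _ ↦ hw k) (signCost_sign_right_nonneg _ _)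

lemma towerCost_nonpos {w : ℕ → ℝ} (hw : ∀ l, 0 ≤ w l) (n : ℕ) (τ : ℕ → SignType) (v : ℕ → ℝ) :
    towerCost n w (fun l ↦ SignType.sign (v l)) τ v ≤ 0 :=
  Finset.sum_nonpos fun _ _ ↦ mul_nonpos_of_nonneg_of_nonpos (Finset.prod_nonneg fun k _ ↦ hw k)
    (signCost_sign_left_nonpos _ _)

/-- A sequence of functions on `(0,∞)`, zero from index `n` on, in which each function is the
derivative of the previous one up to the factor `t ^ (b l - 1)`. -/
structure IsPowerTower (b : ℕ → ℝ) (G : ℕ → ℝ → ℝ) (n : ℕ) : Prop where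
  exponent_pos : ∀ l, 0 < b l
  hasDerivAt : ∀ l t, 0 < t → HasDerivAt (G l) (t ^ (b l - 1) * G (l + 1) t) t
  eq_zero : ∀ l, n ≤ l → ∀ t, 0 < t → G l t = 0

/-- The Rolle bound for a power tower on `[z, y]`: it bounds the bottom function at `y` as soon as
that function vanishes somewhere on `[z, y]`. -/
def rolleBound (b : ℕ → ℝ) (G : ℕ → ℝ → ℝ) (n : ℕ) (z y : ℝ) : ℝ :=
  towerCost n (fun l ↦ 2 * (y ^ b l / b l)) (fun l ↦ SignType.sign (G l z))
    (fun l ↦ SignType.sign (G l y)) (fun l ↦ G l y)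

lemma rolleBound_neg (b : ℕ → ℝ) (G : ℕ → ℝ → ℝ) (n : ℕ) (z y : ℝ) :
    rolleBound b (fun l t ↦ -G l t) n z y = rolleBound b G n z y := by
  simp only [rolleBound, towerCost, Left.sign_neg, signCost_neg]

lemma rolleBound_succ (b : ℕ → ℝ) (G : ℕ → ℝ → ℝ) (n : ℕ) (z y : ℝ) :
    rolleBound b G (n + 1) z y = signCost (SignType.sign (G 0 z)) (SignType.sign (G 0 y)) (G 0 y) +
      2 * (y ^ b 0 / b 0) * rolleBound (fun l ↦ b (l + 1)) (fun l ↦ G (l + 1)) n z y :=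
  towerCost_succ _ _ _ _ _

lemma mul_rolleBound_tail_le (b : ℕ → ℝ) (G : ℕ → ℝ → ℝ) (n : ℕ) (z y : ℝ) :
    2 * (y ^ b 0 / b 0) * rolleBound (fun l ↦ b (l + 1)) (fun l ↦ G (l + 1)) n z y ≤
      rolleBound b G (n + 1) z y := by
  rw [rolleBound_succ]
  linarith [signCost_sign_right_nonneg (SignType.sign (G 0 z)) (G 0 y)]

namespace IsPowerTower

variable {b : ℕ → ℝ} {G : ℕ → ℝ → ℝ} {n : ℕ} {y z : ℝ}

lemma tail (h : IsPowerTower b G (n + 1)) :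
    IsPowerTower (fun l ↦ b (l + 1)) (fun l ↦ G (l + 1)) n :=
  ⟨fun l ↦ h.exponent_pos _, fun l ↦ h.hasDerivAt _, fun l hl ↦ h.eq_zero _ (by omega)⟩

lemma neg (h : IsPowerTower b G n) : IsPowerTower b (fun l t ↦ -G l t) n :=
  ⟨h.exponent_pos, fun l t ht ↦ by simpa using (h.hasDerivAt l t ht).fun_neg,
    fun l hl t ht ↦ by simp [h.eq_zero l hl t ht]⟩

lemma rolleBound_nonneg (h : IsPowerTower b G n) (hy : 0 < y) : 0 ≤ rolleBound b G n z y :=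
  towerCost_nonneg (fun l ↦ have := h.exponent_pos l; by positivity) _ _ _

lemma rpow_div_mul_rolleBound_tail_le (h : IsPowerTower b G (n + 1)) (hy : 0 < y) :
    y ^ b 0 / b 0 * rolleBound (fun l ↦ b (l + 1)) (fun l ↦ G (l + 1)) n z y ≤
      rolleBound b G (n + 1) z y := by
  have := mul_rolleBound_tail_le b G n z y
  have hpos : 0 ≤ y ^ b 0 / b 0 * rolleBound (fun l ↦ b (l + 1)) (fun l ↦ G (l + 1)) n z y :=
    mul_nonneg (have := h.exponent_pos 0; by positivity) (h.tail.rolleBound_nonneg hy)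
  linarith

lemma le_add_rolleBound (h : IsPowerTower b G (n + 1)) {t₁ t₂ : ℝ} (h₁ : 0 < t₁) (h₁₂ : t₁ ≤ t₂)
    (h₂ : t₂ ≤ y) (hG : ∀ t ∈ Icc t₁ t₂,
      G 1 t ≤ rolleBound (fun l ↦ b (l + 1)) (fun l ↦ G (l + 1)) n z y) :
    G 0 t₂ ≤ G 0 t₁ + rolleBound b G (n + 1) z y := by
  have hy : 0 < y := by linarith
  have := le_add_of_deriv_le_rpow (h.exponent_pos 0) (h.tail.rolleBound_nonneg hy) h₁ h₁₂ h₂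
    (h.hasDerivAt 0) hG
  linarith [h.rpow_div_mul_rolleBound_tail_le (z := z) hy]

lemma oneSided_of_tail_le (h : IsPowerTower b G (n + 1)) (hz : 0 < z) (hzy : z ≤ y)
    (hG : ∀ t ∈ Icc z y, G 1 t ≤ rolleBound (fun l ↦ b (l + 1)) (fun l ↦ G (l + 1)) n z y) :
    (∀ t ∈ Icc z y, -rolleBound b G (n + 1) z y ≤ G 0 t) ∨
      ∀ t ∈ Icc z y, G 0 t ≤ rolleBound b G (n + 1) z y := by
  have hy := hz.trans_le hzy
  by_cases hGz : G 0 z ≤ 0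
  · right
    intro t ht
    have := h.le_add_rolleBound hz ht.1 ht.2 fun s hs ↦ hG s ⟨hs.1, hs.2.trans ht.2⟩
    linarith
  · left
    intro t ht
    have hB := h.tail.rolleBound_nonneg (z := z) hy
    have hw := h.rpow_div_mul_rolleBound_tail_le (z := z) hy
    have hup := le_add_of_deriv_le_rpow (h.exponent_pos 0) hB (hz.trans_le ht.1) ht.2 le_rfl
      (h.hasDerivAt 0) fun s hs ↦ hG s ⟨ht.1.trans hs.1, hs.2⟩
    by_cases hGy : 0 ≤ G 0 y
    · linarith
    · have hsign : SignType.sign (G 0 z) ≠ SignType.sign (G 0 y) := by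
        rw [sign_pos (not_le.1 hGz), sign_neg (not_le.1 hGy)]
        decide
      have hpos : 0 ≤ y ^ b 0 / b 0 * rolleBound (fun l ↦ b (l + 1)) (fun l ↦ G (l + 1)) n z y :=
        mul_nonneg (have := h.exponent_pos 0; by positivity) hB
      rw [rolleBound_succ, signCost_of_ne hsign]
      linarith [neg_abs_le (G 0 y)]

lemma oneSided (h : IsPowerTower b G n) (hz : 0 < z) (hzy : z ≤ y) :
    (∀ t ∈ Icc z y, -rolleBound b G n z y ≤ G 0 t) ∨
      ∀ t ∈ Icc z y, G 0 t ≤ rolleBound b G n z y := by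
  induction n generalizing b G with
  | zero =>
    left
    intro t ht
    rw [h.eq_zero 0 le_rfl t (hz.trans_le ht.1)]
    simp [rolleBound, towerCost]
  | succ n ih =>
    rcases ih h.tail with hG | hG
    · have := h.neg.oneSided_of_tail_le hz hzy fun t ht ↦ by
        rw [rolleBound_neg (fun l ↦ b (l + 1)) (fun l ↦ G (l + 1))]
        linarith [hG t ht]
      simp only [rolleBound_neg, neg_le_neg_iff] at this
      refine this.symm.imp (fun H t ht ↦ ?_) (fun H t ht ↦ ?_) <;> linarith [H t ht]
    · exact h.oneSided_of_tail_le hz hzy hG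

lemma le_two_mul_of_zero (h : IsPowerTower b G n) (hz : 0 < z) {m : ℝ} (hm : m ∈ Icc z y)
    (hGm : G 0 m = 0) (hGy : |G 0 y| ≤ rolleBound b G n z y) :
    ∀ t ∈ Icc m y, G 0 t ≤ 2 * rolleBound b G n z y := by
  intro t ht
  have hm₀ := hz.trans_le hm.1
  cases n with
  | zero =>
    rw [h.eq_zero 0 le_rfl t (hm₀.trans_le ht.1)]
    simp [rolleBound, towerCost]
  | succ n =>
    have hB := h.rolleBound_nonneg (z := z) (hm₀.trans_le hm.2)
    rcases h.tail.oneSided hz (hm.1.trans hm.2) with hG | hG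
    · have := h.neg.le_add_rolleBound (z := z) (hm₀.trans_le ht.1) ht.2 le_rfl fun s hs ↦ by
        rw [rolleBound_neg (fun l ↦ b (l + 1)) (fun l ↦ G (l + 1))]
        linarith [hG s ⟨hm.1.trans (ht.1.trans hs.1), hs.2⟩]
      rw [rolleBound_neg] at this
      linarith [le_abs_self (G 0 y)]
    · have := h.le_add_rolleBound (z := z) hm₀ ht.1 ht.2 fun s hs ↦
        hG s ⟨hm.1.trans hs.1, hs.2.trans ht.2⟩
      linarith

lemma exists_min_zero (h : IsPowerTower b G n) (hz : 0 < z) (hGz : 0 < G 0 z) (hGy : 0 < G 0 y)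
    (hzero : ∃ t ∈ Icc z y, G 0 t = 0) : ∃ m ∈ Ioo z y, G 0 m ≤ 0 ∧ G 1 m = 0 := by
  obtain ⟨t, ht, hGt⟩ := hzero
  obtain ⟨m, hm, hmin⟩ := (isCompact_Icc (a := z) (b := y)).exists_isMinOn ⟨t, ht⟩
    (f := G 0) fun t ht ↦ (h.hasDerivAt 0 t (hz.trans_le ht.1)).continuousAt.continuousWithinAt
  have hGm : G 0 m ≤ 0 := hGt ▸ hmin ht
  have hzm : z < m := lt_of_le_of_ne hm.1 (by rintro rfl; linarith)
  have hmy : m < y := lt_of_le_of_ne hm.2 (by rintro rfl; linarith)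
  have hder := (hmin.isLocalMin (Icc_mem_nhds hzm hmy)).hasDerivAt_eq_zero
    (h.hasDerivAt 0 m (hz.trans hzm))
  exact ⟨m, ⟨hzm, hmy⟩, hGm,
    (mul_eq_zero.1 hder).resolve_left (Real.rpow_pos_of_pos (hz.trans hzm) _).ne'⟩

lemma le_rolleBound_of_tail (h : IsPowerTower b G (n + 1)) (hz : 0 < z)
    (htail : (∃ t ∈ Icc z y, G 1 t = 0) →
      |G 1 y| ≤ rolleBound (fun l ↦ b (l + 1)) (fun l ↦ G (l + 1)) n z y)
    (hzero : ∃ t ∈ Icc z y, G 0 t = 0) (hGz : 0 < G 0 z) (hGy : 0 < G 0 y) :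
    G 0 y ≤ rolleBound b G (n + 1) z y := by
  obtain ⟨m, hm, hGm, hG1m⟩ := h.exists_min_zero hz hGz hGy hzero
  have hm' := Ioo_subset_Icc_self hm
  have hm₀ : 0 < m := hz.trans hm.1
  have hy : 0 < y := hm₀.trans hm.2
  have hB := h.tail.rolleBound_nonneg (z := z) hy
  have := le_add_of_deriv_le_rpow (h.exponent_pos 0) (by positivity) hm₀ hm'.2 le_rfl
    (h.hasDerivAt 0) (h.tail.le_two_mul_of_zero hz hm' hG1m (htail ⟨m, hm', hG1m⟩))
  linarith [mul_rolleBound_tail_le b G n z y]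

theorem abs_le_rolleBound (h : IsPowerTower b G n) (hz : 0 < z) (hzy : z ≤ y)
    (hzero : ∃ t ∈ Icc z y, G 0 t = 0) : |G 0 y| ≤ rolleBound b G n z y := by
  have hy := hz.trans_le hzy
  induction n generalizing b G with
  | zero => simp [h.eq_zero 0 le_rfl y hy, rolleBound, towerCost]
  | succ n ih =>
    have htail := ih h.tail
    by_cases hs : SignType.sign (G 0 z) = SignType.sign (G 0 y)
    · rcases lt_trichotomy (G 0 y) 0 with hGy | hGy | hGy
      · rw [sign_neg hGy, sign_eq_neg_one_iff] at hs
        have := h.neg.le_rolleBound_of_tail (y := y) hz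
          (by simpa only [abs_neg, neg_eq_zero,
            rolleBound_neg (fun l ↦ b (l + 1)) (fun l ↦ G (l + 1))] using htail)
          (by simpa only [neg_eq_zero] using hzero) (neg_pos.2 hs) (neg_pos.2 hGy)
        rwa [rolleBound_neg, ← abs_of_neg hGy] at this
      · simpa [hGy] using h.rolleBound_nonneg hy
      · rw [sign_pos hGy, sign_eq_one_iff] at hs
        rw [abs_of_pos hGy]
        exact h.le_rolleBound_of_tail hz htail hzero hs hGy
    · have hw : 0 ≤ 2 * (y ^ b 0 / b 0) := have := h.exponent_pos 0; by positivity
      rw [rolleBound_succ, signCost_of_ne hs]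
      linarith [mul_nonneg hw (h.tail.rolleBound_nonneg (z := z) hy)]

end IsPowerTower

end RolleBounds

open Filter Topology

/-! ### Generalized power series -/

section GenPowerSeries

/-- `v` is, near `0+`, the sum of a convergent generalized power series `∑ a_μ x^μ` with real
exponents `μ ≥ θ`, finitely many of which lie below any given bound. -/
def IsGenPowerSeries (θ : ℝ) (v : ℝ → ℝ) : Prop :=
  ∃ a : ℝ → ℝ, (∀ μ, a μ ≠ 0 → θ ≤ μ) ∧ (∀ M, {μ | a μ ≠ 0 ∧ μ ≤ M}.Finite) ∧
    ∀ᶠ x in 𝓝[>] 0, HasSum (fun μ ↦ a μ * x ^ μ) (v x)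

namespace IsGenPowerSeries

variable {θ θ' : ℝ} {v w : ℝ → ℝ}

lemma of_hasSum {ι : Type*} {a e : ι → ℝ} (hθ : ∀ i, a i ≠ 0 → θ ≤ e i)
    (hfin : ∀ M, {i | a i ≠ 0 ∧ e i ≤ M}.Finite)
    (hs : ∀ᶠ x in 𝓝[>] 0, HasSum (fun i ↦ a i * x ^ e i) (v x)) : IsGenPowerSeries θ v := by
  have hne : ∀ μ, ∑' i : {i // e i = μ}, a i ≠ 0 → ∃ i, e i = μ ∧ a i ≠ 0 := by
    intro μ h
    contrapose! h
    exact (tsum_congr fun i : {i // e i = μ} ↦ h i i.2).trans tsum_zero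
  have hsum : ∀ μ, Summable fun i : {i // e i = μ} ↦ a i := by
    intro μ
    refine summable_of_hasFiniteSupport (((hfin μ).preimage
      Subtype.val_injective.injOn).subset fun i hi ↦ ?_)
    exact ⟨hi, i.2.le⟩
  refine ⟨fun μ ↦ ∑' i : {i // e i = μ}, a i, fun μ h ↦ ?_, fun M ↦ ?_, ?_⟩
  · obtain ⟨i, rfl, hi⟩ := hne μ h
    exact hθ i hi
  · refine ((hfin M).image e).subset ?_
    rintro μ ⟨h, hM⟩
    obtain ⟨i, rfl, hi⟩ := hne μ h
    exact ⟨i, ⟨hi, hM⟩, rfl⟩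
  · filter_upwards [hs] with x hx
    refine ((Equiv.sigmaFiberEquiv e).hasSum_iff.2 hx).sigma fun μ ↦ ?_
    refine ((hsum μ).hasSum.mul_right (x ^ μ)).congr_fun ?_
    rintro ⟨i, rfl⟩
    rfl

lemma mono (hv : IsGenPowerSeries θ v) (h : θ' ≤ θ) : IsGenPowerSeries θ' v :=
  let ⟨a, hθ, hfin⟩ := hv
  ⟨a, fun μ hμ ↦ h.trans (hθ μ hμ), hfin⟩

lemma const_mul_rpow (c θ : ℝ) : IsGenPowerSeries θ fun x ↦ c * x ^ θ :=
  of_hasSum (ι := Unit) (a := fun _ ↦ c) (e := fun _ ↦ θ) (fun _ _ ↦ le_rfl)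
    (fun _ ↦ toFinite _) (.of_forall fun x ↦ hasSum_unique fun _ : Unit ↦ c * x ^ θ)

lemma const (c : ℝ) : IsGenPowerSeries 0 fun _ ↦ c := by
  simpa using const_mul_rpow c 0

lemma zero (θ : ℝ) : IsGenPowerSeries θ fun _ ↦ 0 := by
  simpa using const_mul_rpow 0 θ

lemma add (hv : IsGenPowerSeries θ v) (hw : IsGenPowerSeries θ w) :
    IsGenPowerSeries θ fun x ↦ v x + w x := by
  obtain ⟨a, haθ, hafin, has⟩ := hv
  obtain ⟨b, hbθ, hbfin, hbs⟩ := hw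
  have hne : ∀ μ, a μ + b μ ≠ 0 → a μ ≠ 0 ∨ b μ ≠ 0 := by
    intro μ h
    contrapose! h
    simp [h]
  refine ⟨fun μ ↦ a μ + b μ, fun μ h ↦ (hne μ h).elim (haθ μ) (hbθ μ), fun M ↦ ?_, ?_⟩
  · refine ((hafin M).union (hbfin M)).subset ?_
    rintro μ ⟨h, hM⟩
    exact (hne μ h).imp (fun h ↦ ⟨h, hM⟩) (fun h ↦ ⟨h, hM⟩)
  · filter_upwards [has, hbs] with x hax hbx
    simpa only [add_mul] using hax.add hbx

lemma mul (hv : IsGenPowerSeries θ v) (hw : IsGenPowerSeries θ' w) :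
    IsGenPowerSeries (θ + θ') fun x ↦ v x * w x := by
  obtain ⟨a, haθ, hafin, has⟩ := hv
  obtain ⟨b, hbθ, hbfin, hbs⟩ := hw
  refine of_hasSum (a := fun p : ℝ × ℝ ↦ a p.1 * b p.2) (e := fun p ↦ p.1 + p.2)
    (fun p hp ↦ ?_) (fun M ↦ ?_) ?_
  · exact add_le_add (haθ _ (left_ne_zero_of_mul hp)) (hbθ _ (right_ne_zero_of_mul hp))
  · refine ((hafin (M - θ')).prod (hbfin (M - θ))).subset ?_
    rintro p ⟨hp, hM⟩
    have ha := left_ne_zero_of_mul hp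
    have hb := right_ne_zero_of_mul hp
    have h₁ := haθ _ ha
    have h₂ := hbθ _ hb
    exact ⟨⟨ha, by linarith⟩, hb, by linarith⟩
  · filter_upwards [has, hbs, self_mem_nhdsWithin] with x hax hbx hx
    refine (hax.mul hbx (summable_mul_of_summable_norm hax.summable.norm
      hbx.summable.norm)).congr_fun fun p ↦ ?_
    rw [Real.rpow_add hx]
    ring

lemma isBigO (hv : IsGenPowerSeries θ v) : v =O[𝓝[>] 0] fun x ↦ x ^ θ := by
  obtain ⟨a, hθ, -, hs⟩ := hv
  obtain ⟨ε, hε, hε0⟩ := (hs.and self_mem_nhdsWithin).exists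
  have hε0 : 0 < ε := hε0
  refine Asymptotics.IsBigO.of_bound (∑' μ, ‖a μ * ε ^ μ‖ * ε ^ (-θ)) ?_
  filter_upwards [hs, Ioo_mem_nhdsGT hε0] with x hx hxε
  rw [← tsum_mul_right, ← hx.tsum_eq]
  refine tsum_of_norm_bounded ((hε.summable.norm.mul_right _).mul_right _).hasSum fun μ ↦ ?_
  rcases eq_or_ne (a μ) 0 with h0 | h0
  · simp [h0]
  have hpow : x ^ (μ - θ) ≤ ε ^ (μ - θ) :=
    Real.rpow_le_rpow hxε.1.le hxε.2.le (sub_nonneg.2 (hθ μ h0))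
  calc ‖a μ * x ^ μ‖ = |a μ| * x ^ (μ - θ) * x ^ θ := by
        rw [norm_mul, Real.norm_eq_abs, Real.norm_rpow_of_nonneg hxε.1.le,
          Real.norm_of_nonneg hxε.1.le, mul_assoc, ← Real.rpow_add hxε.1, sub_add_cancel]
    _ ≤ |a μ| * ε ^ (μ - θ) * x ^ θ := by
        have := Real.rpow_nonneg hxε.1.le θ
        gcongr
    _ = ‖a μ * ε ^ μ‖ * ε ^ (-θ) * ‖x ^ θ‖ := by
        rw [norm_mul, Real.norm_eq_abs, Real.norm_rpow_of_nonneg hε0.le, Real.norm_of_nonneg hε0.le,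
          sub_eq_add_neg, Real.rpow_add hε0, mul_assoc |a μ| (ε ^ μ),
          Real.norm_of_nonneg (Real.rpow_nonneg hxε.1.le θ)]

lemma tendsto_zero (hv : IsGenPowerSeries θ v) (hθ : 0 < θ) : Tendsto v (𝓝[>] 0) (𝓝 0) := by
  refine hv.isBigO.trans_tendsto (tendsto_nhdsWithin_of_tendsto_nhds ?_)
  simpa [Real.zero_rpow hθ.ne'] using (Real.continuousAt_rpow_const 0 θ (Or.inr hθ.le)).tendsto

end IsGenPowerSeries

/-- The ring of functions that are generalized power series with nonnegative exponents. -/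
def genPowerSeriesSubring : Subring (ℝ → ℝ) where
  carrier := {v | IsGenPowerSeries 0 v}
  mul_mem' hv hw := by simpa using! IsGenPowerSeries.mul hv hw
  one_mem' := .const 1
  add_mem' := .add
  zero_mem' := .zero 0
  neg_mem' {v} hv := by simpa using! (IsGenPowerSeries.const (-1)).mul hv

/-- Near `0+`, `V` is a nonzero monomial `c x^ν` times `1` plus a generalized power series with
positive exponents. -/
def HasLeadingTerm (V : ℝ → ℝ) : Prop :=
  ∃ ν c δ : ℝ, ∃ w : ℝ → ℝ, c ≠ 0 ∧ 0 < δ ∧ IsGenPowerSeries δ w ∧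
    ∀ᶠ x in 𝓝[>] 0, V x = x ^ ν * (c + w x)

lemma HasLeadingTerm.exists_isTheta_rpow {V : ℝ → ℝ} (hV : HasLeadingTerm V) :
    ∃ ν : ℝ, V =Θ[𝓝[>] 0] fun x ↦ x ^ ν := by
  obtain ⟨ν, c, δ, w, hc, hδ, hw, hV⟩ := hV
  have hlim : Tendsto (fun x ↦ c + w x) (𝓝[>] 0) (𝓝 c) := by
    simpa using (hw.tendsto_zero hδ).const_add c
  refine ⟨ν, (Asymptotics.isTheta_of_div_tendsto_nhds_ne_zero (hlim.congr' ?_) hc).symm⟩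
  filter_upwards [hV, self_mem_nhdsWithin] with x hx hx0
  rw [hx, mul_div_cancel_left₀ _ (Real.rpow_pos_of_pos hx0 ν).ne']

lemma HasLeadingTerm.eventually_ne_zero {V : ℝ → ℝ} (hV : HasLeadingTerm V) :
    ∀ᶠ x in 𝓝[>] 0, V x ≠ 0 := by
  obtain ⟨ν, hν⟩ := hV.exists_isTheta_rpow
  filter_upwards [hν.eq_zero_iff, self_mem_nhdsWithin] with x hx hx0
  exact hx.not.2 (Real.rpow_pos_of_pos hx0 ν).ne'

lemma exists_pos_add_le_of_finite_Iic {s : Set ℝ} {ν : ℝ} (hν : ∀ μ ∈ s, ν < μ)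
    (hfin : {μ ∈ s | μ ≤ ν + 1}.Finite) : ∃ δ > 0, ∀ μ ∈ s, ν + δ ≤ μ := by
  rcases {μ ∈ s | μ ≤ ν + 1}.eq_empty_or_nonempty with he | hne
  · refine ⟨1, one_pos, fun μ hμ ↦ le_of_not_ge fun h ↦ ?_⟩
    exact he.subset ⟨hμ, h⟩
  · obtain ⟨m, ⟨hm, hm1⟩, hmin⟩ := exists_min_image _ id hfin hne
    refine ⟨m - ν, sub_pos.2 (hν m hm), fun μ hμ ↦ ?_⟩
    rw [add_sub_cancel]
    rcases le_total μ (ν + 1) with h | h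
    · exact hmin μ ⟨hμ, h⟩
    · exact hm1.trans h

lemma hasLeadingTerm_of_hasSum {a v : ℝ → ℝ} (ha : a ≠ 0)
    (hfin : ∀ M, {μ | a μ ≠ 0 ∧ μ ≤ M}.Finite)
    (hs : ∀ᶠ x in 𝓝[>] 0, HasSum (fun μ ↦ a μ * x ^ μ) (v x)) : HasLeadingTerm v := by
  obtain ⟨M, hM⟩ := Function.ne_iff.1 ha
  obtain ⟨ν, ⟨hν, hνM⟩, hmin⟩ := exists_min_image _ id (hfin M) ⟨M, hM, le_rfl⟩
  have hlt : ∀ μ ∈ {μ | a μ ≠ 0 ∧ μ ≠ ν}, ν < μ := by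
    rintro μ ⟨hμ, hne⟩
    refine lt_of_le_of_ne ?_ hne.symm
    rcases le_total μ M with h | h
    · exact hmin μ ⟨hμ, h⟩
    · exact hνM.trans h
  obtain ⟨δ, hδ, hgap⟩ := exists_pos_add_le_of_finite_Iic hlt
    ((hfin (ν + 1)).subset fun μ hμ ↦ ⟨hμ.1.1, hμ.2⟩)
  have hupd : ∀ μ, Function.update a ν 0 μ ≠ 0 → a μ ≠ 0 ∧ μ ≠ ν := by
    intro μ h
    rcases eq_or_ne μ ν with rfl | hne
    · simp at h
    · exact ⟨by simpa [hne] using h, hne⟩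
  refine ⟨ν, a ν, δ, fun x ↦ x ^ (-ν) * (0 - a ν * x ^ ν + v x), hν, hδ,
    .of_hasSum (a := Function.update a ν 0) (e := fun μ ↦ μ - ν)
      (fun μ h ↦ by linarith [hgap μ (hupd μ h)]) (fun M ↦ ?_) ?_, ?_⟩
  · refine (hfin (M + ν)).subset ?_
    rintro μ ⟨h, hM⟩
    exact ⟨(hupd μ h).1, by linarith⟩
  · filter_upwards [hs, self_mem_nhdsWithin] with x hx hx0
    have hx' : HasSum (fun μ ↦ Function.update a ν 0 μ * x ^ μ) (0 - a ν * x ^ ν + v x) := by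
      refine (hx.update ν 0).congr_fun fun μ ↦ ?_
      rcases eq_or_ne μ ν with rfl | hne <;> simp [*]
    refine (hx'.mul_left (x ^ (-ν))).congr_fun fun μ ↦ ?_
    rw [Real.rpow_sub hx0, Real.rpow_neg (le_of_lt hx0)]
    ring
  · filter_upwards [self_mem_nhdsWithin] with x hx0
    have := (Real.rpow_pos_of_pos hx0 ν).ne'
    rw [Real.rpow_neg (le_of_lt hx0)]
    field_simp
    ring

lemma IsGenPowerSeries.eventuallyEq_zero_or_hasLeadingTerm {θ : ℝ} {v : ℝ → ℝ}
    (hv : IsGenPowerSeries θ v) : v =ᶠ[𝓝[>] 0] 0 ∨ HasLeadingTerm v := by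
  obtain ⟨a, -, hfin, hs⟩ := hv
  refine (eq_or_ne a 0).imp ?_ fun ha ↦ hasLeadingTerm_of_hasSum ha hfin hs
  rintro rfl
  filter_upwards [hs] with x hx
  exact hx.unique (by simp)

end GenPowerSeries

/-! ### Weierstrass division -/

section WeightedNorm

open scoped ENNReal NNReal PowerSeries

/-- The `ℓ¹` norm of the coefficients of a power series, weighted by the powers of `ρ`. -/
def weightedNorm (ρ : ℝ≥0) (φ : ℝ⟦X⟧) : ℝ≥0∞ := ∑' n, ‖PowerSeries.coeff n φ‖ₑ * ρ ^ n

/-- The value at `z` of a real power series, with the junk value `0` where it diverges. -/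
def powerSeriesSum (φ : ℝ⟦X⟧) (z : ℝ) : ℝ := ∑' n, PowerSeries.coeff n φ * z ^ n

/-- The quotient of a power series by `X ^ m`, the terms of degree less than `m` being dropped. -/
def powerSeriesShift (m : ℕ) (φ : ℝ⟦X⟧) : ℝ⟦X⟧ := .mk fun n ↦ PowerSeries.coeff (n + m) φ

variable {ρ : ℝ≥0} {φ ψ : ℝ⟦X⟧} {z : ℝ}

lemma weightedNorm_smul (c : ℝ) : weightedNorm ρ (c • φ) = ‖c‖ₑ * weightedNorm ρ φ := by
  simp only [weightedNorm, ← ENNReal.tsum_mul_left, PowerSeries.coeff_smul, smul_eq_mul, enorm_mul,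
    mul_assoc]

lemma weightedNorm_mul_le : weightedNorm ρ (φ * ψ) ≤ weightedNorm ρ φ * weightedNorm ρ ψ := by
  have hcoeff (n : ℕ) : ‖PowerSeries.coeff n (φ * ψ)‖ₑ * ρ ^ n ≤
      ∑' p : Finset.HasAntidiagonal.antidiagonal n, ‖PowerSeries.coeff p.1.1 φ‖ₑ * ρ ^ p.1.1 *
        (‖PowerSeries.coeff p.1.2 ψ‖ₑ * ρ ^ p.1.2) := by
    rw [Finset.tsum_subtype _ fun p : ℕ × ℕ ↦ ‖PowerSeries.coeff p.1 φ‖ₑ * (ρ : ℝ≥0∞) ^ p.1 *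
      (‖PowerSeries.coeff p.2 ψ‖ₑ * ρ ^ p.2), PowerSeries.coeff_mul]
    refine (mul_le_mul_left (enorm_sum_le _ _) _).trans_eq ?_
    rw [Finset.sum_mul]
    refine Finset.sum_congr rfl fun p hp ↦ ?_
    rw [← Finset.HasAntidiagonal.mem_antidiagonal.1 hp, enorm_mul, pow_add]
    ring
  calc weightedNorm ρ (φ * ψ) ≤ _ := ENNReal.tsum_le_tsum hcoeff
    _ = ∑' p : ℕ × ℕ, ‖PowerSeries.coeff p.1 φ‖ₑ * ρ ^ p.1 *
          (‖PowerSeries.coeff p.2 ψ‖ₑ * ρ ^ p.2) := by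
        rw [← Finset.HasAntidiagonal.sigmaAntidiagonalEquivProd.tsum_eq, ENNReal.tsum_sigma']
        rfl
    _ = weightedNorm ρ φ * weightedNorm ρ ψ := by
        rw [ENNReal.tsum_prod']
        simp only [ENNReal.tsum_mul_left, ENNReal.tsum_mul_right, weightedNorm]

lemma pow_mul_weightedNorm_shift_le (m : ℕ) :
    ρ ^ m * weightedNorm ρ (powerSeriesShift m φ) ≤ weightedNorm ρ φ := by
  rw [weightedNorm, weightedNorm, ← ENNReal.tsum_mul_left]
  refine le_of_eq_of_le (tsum_congr fun n ↦ ?_)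
    (ENNReal.tsum_comp_le_tsum_of_injective (add_left_injective m) _)
  rw [powerSeriesShift, PowerSeries.coeff_mk, pow_add]
  ring

lemma enorm_coeff_mul_pow_le_weightedNorm (j : ℕ) :
    ‖PowerSeries.coeff j φ‖ₑ * ρ ^ j ≤ weightedNorm ρ φ :=
  ENNReal.le_tsum j

lemma enorm_coeff_mul_pow_le (hz : ‖z‖₊ ≤ ρ) (n : ℕ) :
    ‖PowerSeries.coeff n φ * z ^ n‖ₑ ≤ ‖PowerSeries.coeff n φ‖ₑ * ρ ^ n := by
  rw [enorm_mul, enorm_pow]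
  gcongr
  exact ENNReal.coe_le_coe.2 hz

lemma enorm_powerSeriesSum_le (hz : ‖z‖₊ ≤ ρ) : ‖powerSeriesSum φ z‖ₑ ≤ weightedNorm ρ φ :=
  enorm_tsum_le_tsum_enorm.trans (ENNReal.tsum_le_tsum (enorm_coeff_mul_pow_le hz))

lemma summable_norm_coeff_mul_pow (hφ : weightedNorm ρ φ ≠ ∞) (hz : ‖z‖₊ ≤ ρ) :
    Summable fun n ↦ ‖PowerSeries.coeff n φ * z ^ n‖ :=
  tsum_enorm_ne_top_iff_summable_norm.1
    (ne_top_of_le_ne_top hφ (ENNReal.tsum_le_tsum (enorm_coeff_mul_pow_le hz)))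

lemma powerSeriesSum_smul (c : ℝ) : powerSeriesSum (c • φ) z = c * powerSeriesSum φ z := by
  simp only [powerSeriesSum, ← tsum_mul_left, PowerSeries.coeff_smul, smul_eq_mul, mul_assoc]

lemma powerSeriesSum_mul (hφ : weightedNorm ρ φ ≠ ∞) (hψ : weightedNorm ρ ψ ≠ ∞)
    (hz : ‖z‖₊ ≤ ρ) : powerSeriesSum (φ * ψ) z = powerSeriesSum φ z * powerSeriesSum ψ z := by
  rw [powerSeriesSum, powerSeriesSum, powerSeriesSum,
    tsum_mul_tsum_eq_tsum_sum_antidiagonal_of_summable_norm (summable_norm_coeff_mul_pow hφ hz)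
      (summable_norm_coeff_mul_pow hψ hz)]
  refine tsum_congr fun n ↦ ?_
  rw [PowerSeries.coeff_mul, Finset.sum_mul]
  refine Finset.sum_congr rfl fun p hp ↦ ?_
  rw [← Finset.HasAntidiagonal.mem_antidiagonal.1 hp, pow_add]
  ring

lemma powerSeriesSum_eq_sum_add_shift (hφ : weightedNorm ρ φ ≠ ∞) (hz : ‖z‖₊ ≤ ρ) (m : ℕ) :
    powerSeriesSum φ z = ∑ j : Fin m, PowerSeries.coeff j φ * z ^ (j : ℕ) +
      z ^ m * powerSeriesSum (powerSeriesShift m φ) z := by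
  rw [powerSeriesSum, ← (summable_norm_coeff_mul_pow hφ hz).of_norm.sum_add_tsum_nat_add m,
    Fin.sum_univ_eq_sum_range fun j ↦ PowerSeries.coeff j φ * z ^ j, powerSeriesSum,
    ← tsum_mul_left]
  congr 1
  refine tsum_congr fun n ↦ ?_
  rw [powerSeriesShift, PowerSeries.coeff_mk, pow_add]
  ring

lemma exists_powerSeriesSum_of_analyticAt {f : ℝ → ℝ} (h : AnalyticAt ℝ f 0) :
    ∃ φ : ℝ⟦X⟧, ∀ᶠ ρ : ℝ≥0 in 𝓝[>] 0, weightedNorm ρ φ ≠ ∞ ∧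
      ∀ z, ‖z‖₊ ≤ ρ → f z = powerSeriesSum φ z := by
  obtain ⟨p, r, hp⟩ := h
  obtain ⟨R, hR0, hR⟩ := ENNReal.lt_iff_exists_nnreal_btwn.1 hp.r_pos
  refine ⟨.mk p.coeff, ?_⟩
  filter_upwards [Ioo_mem_nhdsGT (ENNReal.coe_pos.1 hR0)] with ρ hρ
  have hρr : (ρ : ℝ≥0∞) < r := (ENNReal.coe_lt_coe.2 hρ.2).trans hR
  refine ⟨?_, fun z hz ↦ ?_⟩
  · have := p.summable_norm_mul_pow (hρr.trans_le hp.r_le)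
    rw [weightedNorm]
    convert tsum_enorm_ne_top_iff_summable_norm.2 this.norm using 3 with n
    simp [enorm_mul, FormalMultilinearSeries.norm_apply_eq_norm_coef]
  · have hz' : z ∈ Metric.eball (0 : ℝ) r := by
      rw [mem_eball_zero_iff]
      exact (ENNReal.coe_le_coe.2 hz).trans_lt hρr
    have := hp.hasSum hz'
    rw [zero_add] at this
    rw [powerSeriesSum, ← this.tsum_eq]
    refine tsum_congr fun n ↦ ?_
    rw [FormalMultilinearSeries.apply_eq_pow_smul_coeff, PowerSeries.coeff_mk, smul_eq_mul,
      mul_comm]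

end WeightedNorm

section Words

open scoped ENNReal

variable {I : Type*}

/-- A list is either empty or has a head and a tail. -/
def listEquivUnitSumProd (I : Type*) : List I ≃ Unit ⊕ I × List I where
  toFun
    | [] => .inl ()
    | i :: l => .inr (i, l)
  invFun
    | .inl _ => []
    | .inr p => p.1 :: p.2
  left_inv l := by cases l <;> rfl
  right_inv s := by cases s <;> rfl

lemma hasSum_list {M : Type*} [AddCommMonoid M] [TopologicalSpace M] [ContinuousAdd M]
    {f : List I → M} {a : M} (h : HasSum (fun p : I × List I ↦ f (p.1 :: p.2)) a) :
    HasSum f (f [] + a) :=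
  (listEquivUnitSumProd I).symm.hasSum_iff.1
    (HasSum.sum (f := f ∘ (listEquivUnitSumProd I).symm) (hasSum_unique _) h)

lemma tsum_list {f : List I → ℝ} (hf : Summable f) :
    ∑' l, f l = f [] + ∑' l, ∑' i, f (i :: l) := by
  have hcons : Summable fun p : I × List I ↦ f (p.1 :: p.2) :=
    hf.comp_injective fun p q h ↦ Prod.ext (List.cons.inj h).1 (List.cons.inj h).2
  rw [(hasSum_list hcons.hasSum).tsum_eq, ← (Equiv.prodComm _ _).tsum_eq]
  congr 1
  exact ((Equiv.prodComm _ _).summable_iff.2 hcons).tsum_prod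

lemma tsum_list_prod_of_length (w : I → ℝ≥0∞) (n : ℕ) :
    ∑' l : List I, (if l.length = n then (l.map w).prod else 0) = (∑' i, w i) ^ n := by
  induction n with
  | zero =>
    rw [tsum_eq_single [] fun l hl ↦ if_neg (by simpa using hl)]
    simp
  | succ n ih =>
    rw [(hasSum_list ENNReal.summable.hasSum).tsum_eq, pow_succ', ← ih, ENNReal.tsum_prod',
      ← ENNReal.tsum_mul_right]
    simp [← ENNReal.tsum_mul_left]

lemma tsum_list_prod (w : I → ℝ≥0∞) :
    ∑' l : List I, (l.map w).prod = (1 - ∑' i, w i)⁻¹ := by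
  simp_rw [← ENNReal.tsum_geometric, ← tsum_list_prod_of_length]
  rw [ENNReal.tsum_comm]
  exact tsum_congr fun l ↦ (tsum_ite_eq' l.length fun _ ↦ (l.map w).prod).symm

lemma finite_lists_sum_le {p : I → Prop} {e : I → ℝ} {θ : ℝ} (hθ : 0 < θ) (he : ∀ i, p i → θ ≤ e i)
    (hfin : ∀ M, {i | p i ∧ e i ≤ M}.Finite) (M : ℝ) :
    {l : List I | (∀ i ∈ l, p i) ∧ (l.map e).sum ≤ M}.Finite := by
  suffices h : ∀ (n : ℕ) (M : ℝ), M ≤ n * θ →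
      {l : List I | (∀ i ∈ l, p i) ∧ (l.map e).sum ≤ M}.Finite by
    refine h ⌈M / θ⌉₊ M ?_
    rw [← div_le_iff₀ hθ]
    exact Nat.le_ceil _
  have hnonneg : ∀ l : List I, (∀ i ∈ l, p i) → 0 ≤ (l.map e).sum := by
    intro l hl
    refine List.sum_nonneg fun r hr ↦ ?_
    obtain ⟨i, hi, rfl⟩ := List.mem_map.1 hr
    exact hθ.le.trans (he i (hl i hi))
  intro n
  induction n with
  | zero =>
    intro M hM
    refine ((finite_singleton []).subset ?_)
    rintro (_ | ⟨i, l⟩) ⟨hp, hl⟩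
    · rfl
    · have h₁ := he i (hp i (by simp))
      have h₂ := hnonneg l fun j hj ↦ hp j (by simp [hj])
      simp at hl hM
      linarith
  | succ n ih =>
    intro M hM
    refine ((finite_singleton []).union
      ((hfin M).image2 (fun i l ↦ i :: l) (ih (M - θ) ?_))).subset ?_
    · push_cast at hM
      linarith
    rintro (_ | ⟨i, l⟩) ⟨hp, hl⟩
    · exact .inl rfl
    · have h₁ := he i (hp i (by simp))
      have hpl : ∀ j ∈ l, p j := fun j hj ↦ hp j (by simp [hj])
      have h₂ := hnonneg l hpl
      rw [List.map_cons, List.sum_cons] at hl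
      exact .inr ⟨i, ⟨hp i (by simp), by linarith⟩, l, ⟨hpl, by linarith⟩, rfl⟩

lemma list_prod_map_rpow (e : I → ℝ) {x : ℝ} (hx : 0 < x) (l : List I) :
    (l.map fun i ↦ x ^ e i).prod = x ^ (l.map e).sum := by
  induction l with
  | nil => simp
  | cons i l ih => simp [ih, Real.rpow_add hx]

end Words

section WeierstrassDivision

open scoped ENNReal NNReal PowerSeries

variable {I : Type*} (m : ℕ) (H : I → ℝ⟦X⟧) (φ : ℝ⟦X⟧)

/-- The result of applying to `φ` the operators `ψ ↦ H i * (ψ / X ^ m)`, `i` running through a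
word. Summing over all words gives the remainder of the Weierstrass division of `φ` by
`z ^ m - ∑ i, H i`. -/
def divisionIterate : List I → ℝ⟦X⟧
  | [] => φ
  | i :: l => H i * powerSeriesShift m (divisionIterate l)

variable {m H φ}

lemma divisionIterate_smul (c : I → ℝ) (l : List I) :
    divisionIterate m (fun i ↦ c i • H i) φ l = (l.map c).prod • divisionIterate m H φ l := by
  have hshift (r : ℝ) (ψ : ℝ⟦X⟧) : powerSeriesShift m (r • ψ) = r • powerSeriesShift m ψ := by
    ext n
    simp [powerSeriesShift]
  induction l with
  | nil => simp [divisionIterate]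
  | cons i l ih => rw [divisionIterate, ih, hshift, smul_mul_smul_comm, List.map_cons,
      List.prod_cons, divisionIterate]

lemma forall_ne_zero_of_divisionIterate_ne_zero {l : List I} (h : divisionIterate m H φ l ≠ 0) :
    ∀ i ∈ l, H i ≠ 0 := by
  induction l with
  | nil => simp
  | cons i l ih =>
    have h' := right_ne_zero_of_mul h
    refine List.forall_mem_cons.2 ⟨left_ne_zero_of_mul h, ih fun h0 ↦ h' ?_⟩
    rw [h0]
    ext n
    simp [powerSeriesShift]

variable {ρ : ℝ≥0} (hρ : ρ ≠ 0)

include hρ in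
lemma weightedNorm_divisionIterate_le (l : List I) :
    weightedNorm ρ (divisionIterate m H φ l) ≤
      (l.map fun i ↦ weightedNorm ρ (H i) / ρ ^ m).prod * weightedNorm ρ φ := by
  induction l with
  | nil => simp [divisionIterate]
  | cons i l ih =>
    have hm : (ρ : ℝ≥0∞) ^ m ≠ 0 := pow_ne_zero _ (ENNReal.coe_ne_zero.2 hρ)
    have hm' : (ρ : ℝ≥0∞) ^ m ≠ ∞ := ENNReal.pow_ne_top ENNReal.coe_ne_top
    have hshift : weightedNorm ρ (powerSeriesShift m (divisionIterate m H φ l)) ≤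
        weightedNorm ρ (divisionIterate m H φ l) / ρ ^ m := by
      rw [ENNReal.le_div_iff_mul_le (.inl hm) (.inl hm'), mul_comm]
      exact pow_mul_weightedNorm_shift_le m
    calc weightedNorm ρ (divisionIterate m H φ (i :: l))
        ≤ weightedNorm ρ (H i) * (weightedNorm ρ (divisionIterate m H φ l) / ρ ^ m) :=
          weightedNorm_mul_le.trans (by gcongr)
      _ ≤ weightedNorm ρ (H i) * ((l.map fun i ↦ weightedNorm ρ (H i) / ρ ^ m).prod *
            weightedNorm ρ φ / ρ ^ m) := by gcongr
      _ = _ := by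
        rw [List.map_cons, List.prod_cons]
        simp only [div_eq_mul_inv]
        ring

variable (hH : ∑' i, weightedNorm ρ (H i) / ρ ^ m < 1) (hφ : weightedNorm ρ φ ≠ ∞)

include hρ hH hφ in
lemma tsum_weightedNorm_divisionIterate_ne_top :
    ∑' l, weightedNorm ρ (divisionIterate m H φ l) ≠ ∞ := by
  refine ne_top_of_le_ne_top ?_ (ENNReal.tsum_le_tsum (weightedNorm_divisionIterate_le hρ))
  rw [ENNReal.tsum_mul_right, tsum_list_prod]
  exact ENNReal.mul_ne_top (ENNReal.inv_ne_top.2 (tsub_pos_of_lt hH).ne') hφ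

include hρ hH hφ in
lemma summable_coeff_divisionIterate (j : ℕ) :
    Summable fun l ↦ PowerSeries.coeff j (divisionIterate m H φ l) := by
  have hj : (ρ : ℝ≥0∞) ^ j ≠ 0 := pow_ne_zero _ (ENNReal.coe_ne_zero.2 hρ)
  have hj' : (ρ : ℝ≥0∞) ^ j ≠ ∞ := ENNReal.pow_ne_top ENNReal.coe_ne_top
  refine .of_enorm (ne_top_of_le_ne_top (ENNReal.div_ne_top
    (tsum_weightedNorm_divisionIterate_ne_top hρ hH hφ) hj) ?_)
  rw [ENNReal.le_div_iff_mul_le (.inl hj) (.inl hj'), ← ENNReal.tsum_mul_right]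
  exact ENNReal.tsum_le_tsum fun l ↦ enorm_coeff_mul_pow_le_weightedNorm j

include hρ hH hφ in
lemma powerSeriesSum_eq_sum_of_pow_eq {z : ℝ} (hz : ‖z‖₊ ≤ ρ)
    (hzm : z ^ m = ∑' i, powerSeriesSum (H i) z) :
    powerSeriesSum φ z =
      ∑ j : Fin m, (∑' l, PowerSeries.coeff j (divisionIterate m H φ l)) * z ^ (j : ℕ) := by
  have hm : (ρ : ℝ≥0∞) ^ m ≠ 0 := pow_ne_zero _ (ENNReal.coe_ne_zero.2 hρ)
  have hm' : (ρ : ℝ≥0∞) ^ m ≠ ∞ := ENNReal.pow_ne_top ENNReal.coe_ne_top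
  have hfin := tsum_weightedNorm_divisionIterate_ne_top hρ hH hφ
  have hl (l : List I) : weightedNorm ρ (divisionIterate m H φ l) ≠ ∞ :=
    ENNReal.ne_top_of_tsum_ne_top hfin l
  have hHi (i : I) : weightedNorm ρ (H i) ≠ ∞ := by
    have := ENNReal.ne_top_of_tsum_ne_top (hH.trans ENNReal.one_lt_top).ne i
    contrapose! this
    rw [this, ENNReal.top_div_of_ne_top hm']
  set f : List I → ℝ := fun l ↦ powerSeriesSum (divisionIterate m H φ l) z
  set g : List I → ℝ := fun l ↦
    ∑ j : Fin m, PowerSeries.coeff j (divisionIterate m H φ l) * z ^ (j : ℕ)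
  have hf : Summable f := .of_enorm (ne_top_of_le_ne_top hfin
    (ENNReal.tsum_le_tsum fun l ↦ enorm_powerSeriesSum_le hz))
  have hcoeff (j : Fin m) := (summable_coeff_divisionIterate hρ hH hφ j).mul_right (z ^ (j : ℕ))
  have hg : Summable g := summable_sum fun j _ ↦ hcoeff j
  have hstep (l : List I) : ∑' i, f (i :: l) = f l - g l := by
    have hshift : weightedNorm ρ (powerSeriesShift m (divisionIterate m H φ l)) ≠ ∞ := by
      have := pow_mul_weightedNorm_shift_le (ρ := ρ) (φ := divisionIterate m H φ l) m
      contrapose! this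
      rw [this, ENNReal.mul_top hm]
      exact (hl l).lt_top
    simp only [f, g, divisionIterate, powerSeriesSum_mul (hHi _) hshift hz, tsum_mul_right, ← hzm,
      powerSeriesSum_eq_sum_add_shift (hl l) hz m, add_sub_cancel_left]
  have hsum := tsum_list hf
  simp only [hstep, hf.tsum_sub hg] at hsum
  calc powerSeriesSum φ z = f [] := rfl
    _ = ∑' l, g l := by linarith
    _ = _ := by simp only [g, Summable.tsum_finsetSum fun j _ ↦ hcoeff j, tsum_mul_right]

end WeierstrassDivision

section GenWeierstrassDivision

open scoped ENNReal NNReal PowerSeries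

lemma tendsto_tsum_mul_enorm_rpow {I : Type*} {W : I → ℝ≥0∞} {e : I → ℝ} {θ ε : ℝ} (hθ : 0 < θ)
    (he : ∀ i, W i ≠ 0 → θ ≤ e i) (hε : 0 < ε) (hW : ∑' i, W i * ‖ε ^ e i‖ₑ ≠ ∞) :
    Tendsto (fun x : ℝ ↦ ∑' i, W i * ‖x ^ e i‖ₑ) (𝓝[>] 0) (𝓝 0) := by
  have hscale : Tendsto (fun x : ℝ ↦ ‖(x / ε) ^ θ‖ₑ * ∑' i, W i * ‖ε ^ e i‖ₑ) (𝓝[>] 0) (𝓝 0) := by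
    have hcont : ContinuousAt (fun x : ℝ ↦ (x / ε) ^ θ) 0 :=
      (continuousAt_id.div_const ε).rpow_const (.inr hθ.le)
    have := (continuous_enorm.tendsto _).comp hcont.tendsto
    simp only [zero_div, Real.zero_rpow hθ.ne', enorm_zero] at this
    simpa using! ENNReal.Tendsto.mul_const (this.mono_left nhdsWithin_le_nhds) (.inr hW)
  refine tendsto_of_tendsto_of_tendsto_of_le_of_le' tendsto_const_nhds hscale
    (.of_forall fun _ ↦ zero_le) ?_
  filter_upwards [Ioo_mem_nhdsGT hε] with x hx
  rw [← ENNReal.tsum_mul_left]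
  refine ENNReal.tsum_le_tsum fun i ↦ ?_
  rcases eq_or_ne (W i) 0 with h0 | h0
  · simp [h0]
  have hxε : 0 < x / ε := div_pos hx.1 hε
  have hle : (x / ε) ^ e i ≤ (x / ε) ^ θ :=
    Real.rpow_le_rpow_of_exponent_ge hxε ((div_le_one hε).2 hx.2.le) (he i h0)
  calc W i * ‖x ^ e i‖ₑ = ‖(x / ε) ^ e i‖ₑ * (W i * ‖ε ^ e i‖ₑ) := by
        rw [mul_left_comm, ← enorm_mul, ← Real.mul_rpow hxε.le hε.le, div_mul_cancel₀ _ hε.ne']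
    _ ≤ _ := by
        gcongr
        rwa [Real.enorm_of_nonneg (by positivity), Real.enorm_of_nonneg (by positivity),
          ENNReal.ofReal_le_ofReal_iff (by positivity)]

lemma exists_isGenPowerSeries_remainder {I : Type*} {H : I → ℝ⟦X⟧} {e : I → ℝ} {φ : ℝ⟦X⟧} {ρ : ℝ≥0}
    {θ ε : ℝ} (m : ℕ) (hρ : ρ ≠ 0) (hφ : weightedNorm ρ φ ≠ ∞) (hθ : 0 < θ)
    (he : ∀ i, H i ≠ 0 → θ ≤ e i) (hfin : ∀ M, {i | H i ≠ 0 ∧ e i ≤ M}.Finite) (hε : 0 < ε)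
    (hH : ∑' i, weightedNorm ρ (H i) * ‖ε ^ e i‖ₑ ≠ ∞) :
    ∃ B : Fin m → ℝ → ℝ, (∀ j, IsGenPowerSeries 0 (B j)) ∧ ∀ᶠ x in 𝓝[>] (0 : ℝ), ∀ z, ‖z‖₊ ≤ ρ →
      z ^ m = ∑' i, x ^ e i * powerSeriesSum (H i) z →
      powerSeriesSum φ z = ∑ j, B j x * z ^ (j : ℕ) := by
  have hm : (ρ : ℝ≥0∞) ^ m ≠ 0 := pow_ne_zero _ (ENNReal.coe_ne_zero.2 hρ)
  have hsmall : ∀ᶠ x in 𝓝[>] (0 : ℝ), ∑' i, weightedNorm ρ (x ^ e i • H i) / ρ ^ m < 1 := by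
    have hW : ∀ i, weightedNorm ρ (H i) ≠ 0 → θ ≤ e i := fun i hi ↦ he i fun h ↦ hi <| by
      simp [h, weightedNorm]
    have := ENNReal.Tendsto.div_const (tendsto_tsum_mul_enorm_rpow hθ hW hε hH)
      (b := (ρ : ℝ≥0∞) ^ m) (.inr hm)
    rw [ENNReal.zero_div] at this
    filter_upwards [this.eventually_lt_const one_pos] with x hx
    simpa only [weightedNorm_smul, div_eq_mul_inv, ENNReal.tsum_mul_right,
      mul_comm ‖x ^ e _‖ₑ] using hx
  refine ⟨fun j x ↦ ∑' l, PowerSeries.coeff j (divisionIterate m (fun i ↦ x ^ e i • H i) φ l),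
    fun j ↦ .of_hasSum (a := fun l ↦ PowerSeries.coeff j (divisionIterate m H φ l))
      (e := fun l ↦ (l.map e).sum) (fun l hl ↦ ?_) (fun M ↦ ?_) ?_, ?_⟩
  · have hne := forall_ne_zero_of_divisionIterate_ne_zero (ne_zero_of_map hl)
    refine List.sum_nonneg fun r hr ↦ ?_
    obtain ⟨i, hi, rfl⟩ := List.mem_map.1 hr
    exact hθ.le.trans (he i (hne i hi))
  · refine (finite_lists_sum_le hθ he hfin M).subset ?_
    rintro l ⟨hl, hM⟩
    exact ⟨forall_ne_zero_of_divisionIterate_ne_zero (ne_zero_of_map hl), hM⟩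
  · filter_upwards [hsmall, self_mem_nhdsWithin] with x hx hx0
    refine (summable_coeff_divisionIterate hρ hx hφ j).hasSum.congr_fun fun l ↦ ?_
    rw [divisionIterate_smul, list_prod_map_rpow e hx0, PowerSeries.coeff_smul, smul_eq_mul,
      mul_comm]
  · filter_upwards [hsmall] with x hx z hz hzm
    simp only [← powerSeriesSum_smul] at hzm
    exact powerSeriesSum_eq_sum_of_pow_eq hρ hx hφ hz hzm

lemma hasSum_prod_of_fintype {K I M : Type*} [Fintype K] [AddCommMonoid M] [TopologicalSpace M]
    [ContinuousAdd M] {f : K × I → M} {v : K → M} (h : ∀ k, HasSum (fun i ↦ f (k, i)) (v k)) :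
    HasSum f (∑ k, v k) := by
  classical
  have hk (k : K) : HasSum (fun p : K × I ↦ if p.1 = k then f p else 0) (v k) := by
    rw [← (Prod.mk_right_injective k).hasSum_iff
      fun p hp ↦ if_neg fun hpk ↦ hp ⟨p.2, by simp [← hpk]⟩]
    simpa [Function.comp_def] using h k
  simpa using hasSum_sum (s := Finset.univ) fun k _ ↦ hk k

lemma hasSum_mul_powerSeriesSum {K I : Type*} [Fintype K] {h : K → ℝ⟦X⟧} {c : K → I → ℝ}
    {w : I → ℝ} {A : K → ℝ} (z : ℝ) (hA : ∀ k, HasSum (fun i ↦ c k i * w i) (A k)) :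
    HasSum (fun p : K × I ↦ w p.2 * powerSeriesSum (c p.1 p.2 • h p.1) z)
      (∑ k, A k * powerSeriesSum (h k) z) := by
  refine hasSum_prod_of_fintype fun k ↦ ((hA k).mul_right _).congr_fun fun i ↦ ?_
  rw [powerSeriesSum_smul]
  ring

lemma tsum_weightedNorm_smul_ne_top {K I : Type*} [Finite K] {h : K → ℝ⟦X⟧} {c : K → I → ℝ}
    {w : I → ℝ} {ρ : ℝ≥0} (hh : ∀ k, weightedNorm ρ (h k) ≠ ∞)
    (hc : ∀ k, Summable fun i ↦ c k i * w i) :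
    ∑' p : K × I, weightedNorm ρ (c p.1 p.2 • h p.1) * ‖w p.2‖ₑ ≠ ∞ := by
  cases nonempty_fintype K
  rw [ENNReal.tsum_prod', tsum_fintype]
  refine ENNReal.sum_ne_top.2 fun k _ ↦ ?_
  simp_rw [weightedNorm_smul, mul_right_comm _ (weightedNorm ρ _), ← enorm_mul,
    ENNReal.tsum_mul_right]
  exact ENNReal.mul_ne_top (tsum_enorm_ne_top_iff_summable_norm.2 (hc k).norm) (hh k)

/- Writing `F = z ^ m * u` with `u` a unit, the equation becomes `z ^ m = -∑ A k * (P k / u)`, and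
every `A k` is small; substituting it repeatedly lowers all powers of `z` below `m`. -/
theorem exists_weierstrassDivision {K : Type*} [Fintype K] {F : ℝ → ℝ} {P : K → ℝ → ℝ}
    {A : K → ℝ → ℝ} {θ : ℝ} (hF : AnalyticAt ℝ F 0) (hF0 : ¬ ∀ᶠ z in 𝓝 0, F z = 0)
    (hP : ∀ k, AnalyticAt ℝ (P k) 0) (hθ : 0 < θ) (hA : ∀ k, IsGenPowerSeries θ (A k)) :
    ∃ m : ℕ, ∀ φ : ℝ → ℝ, AnalyticAt ℝ φ 0 →
      ∃ B : Fin m → ℝ → ℝ, (∀ j, IsGenPowerSeries 0 (B j)) ∧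
        ∀ᶠ q : ℝ × ℝ in 𝓝[>] 0 ×ˢ 𝓝 0, F q.2 + ∑ k, A k q.1 * P k q.2 = 0 →
          φ q.2 = ∑ j, B j q.1 * q.2 ^ (j : ℕ) := by
  obtain ⟨m, u, hu, hu0, hFu⟩ := hF.exists_eventuallyEq_pow_smul_nonzero_iff.2 hF0
  refine ⟨m, fun φ hφ ↦ ?_⟩
  choose h hh using fun k ↦ exists_powerSeriesSum_of_analyticAt ((hP k).fun_div hu hu0)
  obtain ⟨φs, hφs⟩ := exists_powerSeriesSum_of_analyticAt hφ
  obtain ⟨ρ, ⟨hφρ, hhρ⟩, hρ : 0 < ρ⟩ :=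
    ((hφs.and (eventually_all.2 hh)).and self_mem_nhdsWithin).exists
  choose a ha hafin has using hA
  obtain ⟨ε, hε, hε0⟩ := ((eventually_all.2 has).and self_mem_nhdsWithin).exists
  set H : K × ℝ → ℝ⟦X⟧ := fun p ↦ (-a p.1 p.2) • h p.1
  have hH (p) (hp : H p ≠ 0) : a p.1 p.2 ≠ 0 := neg_ne_zero.1 (left_ne_zero_of_smul hp)
  have hfin (M : ℝ) : {p | H p ≠ 0 ∧ p.2 ≤ M}.Finite :=
    (finite_iUnion fun k ↦ (hafin k M).image (Prod.mk k)).subset fun p hp ↦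
      mem_iUnion.2 ⟨p.1, p.2, ⟨hH p hp.1, hp.2⟩, rfl⟩
  have hsum : ∑' p, weightedNorm ρ (H p) * ‖ε ^ p.2‖ₑ ≠ ∞ :=
    tsum_weightedNorm_smul_ne_top (c := fun k μ ↦ -a k μ) (fun k ↦ (hhρ k).1) fun k ↦ by
      simpa only [neg_mul] using (hε k).summable.neg
  obtain ⟨B, hB, hdiv⟩ := exists_isGenPowerSeries_remainder m hρ.ne' hφρ.1 hθ
    (fun p hp ↦ ha p.1 p.2 (hH p hp)) hfin hε0 hsum
  refine ⟨B, hB, ?_⟩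
  have hz : ∀ᶠ z in 𝓝 (0 : ℝ), ‖z‖₊ < ρ ∧ F z = z ^ m * u z ∧ u z ≠ 0 := by
    filter_upwards [continuous_nnnorm.continuousAt.eventually_lt_const (by simpa using hρ), hFu,
      hu.continuousAt.eventually_ne hu0] with z h1 h2 h3
    exact ⟨h1, by simpa using h2, h3⟩
  refine ((hdiv.and (eventually_all.2 has)).prod_mk hz).mono ?_
  rintro ⟨x, z⟩ ⟨⟨hx, hxA⟩, hzρ, hFz, huz⟩ hzero
  rw [hφρ.2 z hzρ.le]
  refine hx z hzρ.le ?_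
  have hH := hasSum_mul_powerSeriesSum (h := h) (c := fun k μ ↦ -a k μ) (w := (x ^ ·)) z
    fun k ↦ by simpa only [neg_mul] using (hxA k).neg
  rw [hH.tsum_eq, ← mul_div_cancel_right₀ (z ^ m) huz, ← hFz, eq_neg_of_add_eq_zero_left hzero,
    neg_div, Finset.sum_div, ← Finset.sum_neg_distrib]
  exact Finset.sum_congr rfl fun k _ ↦ by rw [← (hhρ k).2 z hzρ.le, neg_mul, mul_div_assoc]

end GenWeierstrassDivision

section ZeroLocusGap

open Polynomial

lemma abs_sum_mul_pow_succ_le (n : ℕ) (b : ℕ → ℝ) {g : ℝ} (hg : |g| ≤ 1) :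
    |∑ i ∈ Finset.range n, b i * g ^ (i + 1)| ≤ (∑ i ∈ Finset.range n, |b i|) * |g| := by
  rw [Finset.sum_mul]
  refine (Finset.abs_sum_le_sum_abs _ _).trans ?_
  gcongr with i
  rw [abs_mul, abs_pow]
  gcongr
  exact pow_le_of_le_one (abs_nonneg g) hg i.succ_ne_zero

lemma exists_root_lower_bound {n : ℕ} {a : ℕ → ℝ → ℝ} (ha : ∀ i, IsGenPowerSeries 0 (a i))
    (hne : ∃ i < n, ¬ a i =ᶠ[𝓝[>] 0] 0) :
    ∃ c > 0, ∃ ν : ℝ, ∀ᶠ x in 𝓝[>] 0, ∀ g, ∑ i ∈ Finset.range n, a i x * g ^ i = 0 →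
      |g| < c * x ^ ν → g = 0 := by
  induction n generalizing a with
  | zero => simp at hne
  | succ n ih =>
    by_cases h0 : a 0 =ᶠ[𝓝[>] 0] 0
    · have hne' : ∃ i < n, ¬ a (i + 1) =ᶠ[𝓝[>] 0] 0 := by
        obtain ⟨_ | i, hi, hai⟩ := hne
        · exact absurd h0 hai
        · exact ⟨i, by omega, hai⟩
      obtain ⟨c, hc, ν, h⟩ := ih (fun i ↦ ha (i + 1)) hne'
      refine ⟨c, hc, ν, ?_⟩
      filter_upwards [h, h0] with x hx hx0 g hg hgc
      simp only [Finset.sum_range_succ', hx0, Pi.zero_apply, zero_mul, add_zero, pow_succ,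
        ← mul_assoc, ← Finset.sum_mul] at hg
      exact (mul_eq_zero.1 hg).elim (hx g · hgc) id
    · obtain ⟨ν, hν⟩ :=
        ((ha 0).eventuallyEq_zero_or_hasLeadingTerm.resolve_left h0).exists_isTheta_rpow
      obtain ⟨c, hc, hlow⟩ := hν.isBigO_symm.exists_pos
      obtain ⟨S, hS, hup⟩ := (Asymptotics.IsBigO.sum (s := Finset.range n)
        fun i _ ↦ (ha (i + 1)).isBigO.norm_left).exists_pos
      refine ⟨min 1 (c * S)⁻¹, by positivity, max ν 0, ?_⟩
      filter_upwards [hlow.bound, hup.bound, Ioc_mem_nhdsGT one_pos] with x hxlow hxup hx g hg hgc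
      have hg1 : |g| < 1 := hgc.trans_le <| mul_le_one₀ (min_le_left _ _)
        (Real.rpow_nonneg hx.1.le _) (Real.rpow_le_one hx.1.le hx.2 (le_max_right _ _))
      have hgS : c * S * |g| < x ^ ν := by
        rw [← lt_inv_mul_iff₀ (by positivity)]
        refine hgc.trans_le (mul_le_mul (min_le_right _ _) ?_ (Real.rpow_nonneg hx.1.le _)
          (by positivity))
        exact Real.rpow_le_rpow_of_exponent_ge hx.1 hx.2 (le_max_left _ _)
      have htail : |∑ i ∈ Finset.range n, a (i + 1) x * g ^ (i + 1)| ≤ S * |g| := by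
        refine (abs_sum_mul_pow_succ_le n (fun i ↦ a (i + 1) x) hg1.le).trans ?_
        gcongr
        simpa using (le_abs_self _).trans hxup
      rw [Finset.sum_range_succ', pow_zero, mul_one] at hg
      rw [eq_neg_of_add_eq_zero_right hg, norm_neg,
        Real.norm_of_nonneg (Real.rpow_nonneg hx.1.le ν)] at hxlow
      exact absurd (hxlow.trans (mul_le_mul_of_nonneg_left htail hc.le))
        (by rwa [← mul_assoc, not_le])

lemma isRoot_charpoly_of_mulVec_eq {n : Type*} [Fintype n] [DecidableEq n] {M : Matrix n n ℝ}
    {g : ℝ} {v : n → ℝ} (hv : v ≠ 0) (h : M.mulVec v = g • v) : M.charpoly.IsRoot g := by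
  rw [← Matrix.charpoly_toLin', ← Module.End.hasEigenvalue_iff_isRoot_charpoly]
  exact Module.End.hasEigenvalue_of_hasEigenvector ⟨Module.End.mem_eigenspace_iff.2 h, hv⟩

/-- Multiplication by `g` permutes the remainders modulo `F + ∑ k, A k * P k`; the polynomial is the
characteristic polynomial of that linear map. -/
theorem exists_monic_annihilating {K L : Type*} [Fintype K] [Fintype L] {F : ℝ → ℝ}
    {P : K → ℝ → ℝ} {A : K → ℝ → ℝ} {B Q : L → ℝ → ℝ} {θ : ℝ} (hF : AnalyticAt ℝ F 0)
    (hF0 : ¬ ∀ᶠ z in 𝓝 0, F z = 0) (hP : ∀ k, AnalyticAt ℝ (P k) 0) (hθ : 0 < θ)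
    (hA : ∀ k, IsGenPowerSeries θ (A k)) (hB : ∀ l, IsGenPowerSeries 0 (B l))
    (hQ : ∀ l, AnalyticAt ℝ (Q l) 0) :
    ∃ p : genPowerSeriesSubring[X], p.Monic ∧ ∀ᶠ q : ℝ × ℝ in 𝓝[>] 0 ×ˢ 𝓝 0,
      F q.2 + ∑ k, A k q.1 * P k q.2 = 0 →
        (p.map ((Pi.evalRingHom _ q.1).comp genPowerSeriesSubring.subtype)).IsRoot
          (∑ l, B l q.1 * Q l q.2) := by
  obtain ⟨m, hm⟩ := exists_weierstrassDivision hF hF0 hP hθ hA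
  obtain ⟨A₁, -, hA₁⟩ := hm (fun _ ↦ 1) analyticAt_const
  choose R hR hRdiv using fun p : L × Fin m ↦ hm (fun z ↦ Q p.1 z * z ^ (p.2 : ℕ))
    ((hQ p.1).fun_mul (analyticAt_id.pow _))
  let M : Matrix (Fin m) (Fin m) genPowerSeriesSubring := fun i j ↦
    ∑ l, ⟨B l, hB l⟩ * ⟨R (l, i) j, hR (l, i) j⟩
  refine ⟨M.charpoly, M.charpoly_monic, ?_⟩
  filter_upwards [hA₁, eventually_all.2 hRdiv] with q hq₁ hq hzero
  rw [← Matrix.charpoly_map]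
  refine isRoot_charpoly_of_mulVec_eq (v := fun j ↦ q.2 ^ (j : ℕ)) (fun h0 ↦ ?_) (funext fun i ↦ ?_)
  · have hpow (j : Fin m) : q.2 ^ (j : ℕ) = 0 := congrFun h0 j
    simpa [hpow] using hq₁ hzero
  · have hrow (l : L) : Q l q.2 * q.2 ^ (i : ℕ) = ∑ j, R (l, i) j q.1 * q.2 ^ (j : ℕ) :=
      hq (l, i) hzero
    simp only [Pi.smul_apply, smul_eq_mul, Finset.sum_mul, mul_assoc, hrow]
    have hM (j : Fin m) : (M i j : ℝ → ℝ) q.1 = ∑ l, B l q.1 * R (l, i) j q.1 := by simp [M]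
    simp only [Matrix.mulVec, dotProduct, Matrix.map_apply, RingHom.comp_apply,
      Subring.subtype_apply, Pi.evalRingHom_apply, hM, Finset.sum_mul, Finset.mul_sum, mul_assoc]
    exact Finset.sum_comm

theorem exists_zeroLocus_gap {K L : Type*} [Fintype K] [Fintype L] {F : ℝ → ℝ}
    {P : K → ℝ → ℝ} {A : K → ℝ → ℝ} {B Q : L → ℝ → ℝ} {θ : ℝ} (hF : AnalyticAt ℝ F 0)
    (hF0 : ¬ ∀ᶠ z in 𝓝 0, F z = 0) (hP : ∀ k, AnalyticAt ℝ (P k) 0) (hθ : 0 < θ)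
    (hA : ∀ k, IsGenPowerSeries θ (A k)) (hB : ∀ l, IsGenPowerSeries 0 (B l))
    (hQ : ∀ l, AnalyticAt ℝ (Q l) 0) :
    ∃ c > 0, ∃ ν : ℝ, ∀ᶠ q : ℝ × ℝ in 𝓝[>] 0 ×ˢ 𝓝 0, F q.2 + ∑ k, A k q.1 * P k q.2 = 0 →
      |∑ l, B l q.1 * Q l q.2| < c * q.1 ^ ν → ∑ l, B l q.1 * Q l q.2 = 0 := by
  obtain ⟨p, hp, hroot⟩ := exists_monic_annihilating hF hF0 hP hθ hA hB hQ
  have hlead : ∃ i < p.natDegree + 1, ¬ (p.coeff i : ℝ → ℝ) =ᶠ[𝓝[>] 0] 0 := by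
    refine ⟨p.natDegree, by omega, fun h ↦ ?_⟩
    obtain ⟨x, hx⟩ := h.exists
    simp [hp.coeff_natDegree] at hx
  obtain ⟨c, hc, ν, hcν⟩ := exists_root_lower_bound (fun i ↦ (p.coeff i).2) hlead
  refine ⟨c, hc, ν, ?_⟩
  filter_upwards [hroot, hcν.prod_inl _] with q hq hqc hzero
  refine hqc _ ?_
  have := hq hzero
  rw [Polynomial.IsRoot, Polynomial.eval_map, Polynomial.eval₂_eq_sum_range] at this
  exact this

end ZeroLocusGap

/-! ### Signomials and end coordinates -/

section Signomial

/-- A nonzero generalized polynomial in one variable. -/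
def IsSignomial (v : ℝ → ℝ) : Prop :=
  ∃ (s : Finset ℝ) (c : ℝ → ℝ), s.Nonempty ∧ (∀ α ∈ s, c α ≠ 0) ∧
    ∀ x, 0 < x → v x = ∑ α ∈ s, c α * x ^ α

lemma isSignomial_sum {K : Type*} [Fintype K] {c e : K → ℝ} (he : Function.Injective e)
    (hc : ∃ k, c k ≠ 0) : IsSignomial fun x ↦ ∑ k, c k * x ^ e k := by
  classical
  obtain ⟨k, hk⟩ := hc
  refine ⟨(Finset.univ.filter (c · ≠ 0)).image e, Function.extend e c 0,
    ⟨e k, Finset.mem_image_of_mem _ (by simpa using hk)⟩, ?_, fun x _ ↦ ?_⟩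
  · simp +contextual [he.extend_apply]
  · simp only [Finset.sum_image he.injOn, he.extend_apply]
    exact (Finset.sum_filter_of_ne fun k _ h ↦ left_ne_zero_of_mul h).symm

lemma analyticAt_rpow_const (α : ℝ) {x : ℝ} (hx : 0 < x) : AnalyticAt ℝ (fun x ↦ x ^ α) x := by
  have h : AnalyticAt ℝ (fun x : ℝ ↦ Real.exp (Real.log x * α)) x :=
    ((analyticAt_log hx).fun_mul analyticAt_const).rexp'
  refine h.congr ?_
  filter_upwards [Ioi_mem_nhds hx] with y hy using (Real.rpow_def_of_pos hy α).symm

lemma hasLeadingTerm_of_analyticAt {V : ℝ → ℝ} (hV : AnalyticAt ℝ V 0)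
    (hne : ¬ ∀ᶠ y in 𝓝 0, V y = 0) : HasLeadingTerm V := by
  obtain ⟨p, hp⟩ := id hV
  have hgen : IsGenPowerSeries 0 V := by
    refine .of_hasSum (a := p.coeff) (e := fun n : ℕ ↦ (n : ℝ)) (fun n _ ↦ n.cast_nonneg)
      (fun M ↦ (finite_Iic ⌊M⌋₊).subset fun n hn ↦ Nat.le_floor hn.2) ?_
    filter_upwards [nhdsWithin_le_nhds (hasFPowerSeriesAt_iff.1 hp)] with x hx
    simpa [mul_comm] using hx
  refine hgen.eventuallyEq_zero_or_hasLeadingTerm.resolve_left fun h0 ↦ hne ?_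
  refine hV.frequently_zero_iff_eventually_zero.1 ?_
  exact h0.frequently.filter_mono (nhdsWithin_mono _ fun x hx ↦ ne_of_gt hx)

namespace IsSignomial

variable {v : ℝ → ℝ} {x : ℝ}

lemma hasLeadingTerm (hv : IsSignomial v) : HasLeadingTerm v := by
  classical
  obtain ⟨s, c, ⟨α, hα⟩, hc, hv⟩ := hv
  refine hasLeadingTerm_of_hasSum (a := fun α ↦ if α ∈ s then c α else 0)
    (Function.ne_iff.2 ⟨α, by simpa [hα] using hc α hα⟩)
    (fun M ↦ s.finite_toSet.subset fun α hα ↦ by_contra fun h ↦ hα.1 (if_neg h)) ?_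
  filter_upwards [self_mem_nhdsWithin] with x hx
  rw [hv x hx, Finset.sum_congr rfl fun α hα ↦ show c α * x ^ α = ite _ _ 0 * _ by rw [if_pos hα]]
  exact hasSum_sum_of_ne_finset_zero fun α hα ↦ by simp [hα]

lemma const_mul {r : ℝ} (hr : r ≠ 0) (hv : IsSignomial v) : IsSignomial fun x ↦ r * v x := by
  obtain ⟨s, c, hs, hc, hv⟩ := hv
  refine ⟨s, fun α ↦ r * c α, hs, fun α hα ↦ mul_ne_zero hr (hc α hα), fun x hx ↦ ?_⟩
  simp only [hv x hx, Finset.mul_sum, mul_assoc]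

lemma comp_inv (hv : IsSignomial v) : IsSignomial fun x ↦ v x⁻¹ := by
  classical
  obtain ⟨s, c, hs, hc, hv⟩ := hv
  refine ⟨s.image (-·), fun α ↦ c (-α), hs.image _, by simpa using hc, fun x hx ↦ ?_⟩
  simp only [hv _ (inv_pos.2 hx), Finset.sum_image neg_injective.injOn, neg_neg,
    Real.inv_rpow hx.le, Real.rpow_neg hx.le]

lemma analyticAt (hv : IsSignomial v) (hx : 0 < x) : AnalyticAt ℝ v x := by
  obtain ⟨s, c, -, -, hv⟩ := hv
  have hsum : AnalyticAt ℝ (fun x ↦ ∑ α ∈ s, c α * x ^ α) x :=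
    Finset.analyticAt_fun_sum _ fun α _ ↦ analyticAt_const.fun_mul (analyticAt_rpow_const α hx)
  refine hsum.congr ?_
  filter_upwards [Ioi_mem_nhds hx] with y hy using (hv y hy).symm

lemma not_eventually_eq_zero (hv : IsSignomial v) (hx : 0 < x) : ¬ ∀ᶠ y in 𝓝 x, v y = 0 := by
  intro h0
  have hzero : EqOn v 0 (Ioi 0) := AnalyticOnNhd.eqOn_zero_of_preconnected_of_eventuallyEq_zero
    (fun y hy ↦ hv.analyticAt hy) isPreconnected_Ioi (mem_Ioi.2 hx) h0
  obtain ⟨ξ, hne, hξ⟩ := (hv.hasLeadingTerm.eventually_ne_zero.and self_mem_nhdsWithin).exists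
  exact hne (hzero hξ)

end IsSignomial

/-- `Ξ` is a local coordinate at an end of the positive half-line, or on one side of a point of it:
for small positive values of `Ξ`, every signomial is a generalized power series in `Ξ` up to a
monomial factor. -/
structure IsEndCoordinate (Ξ : ℝ → ℝ) : Prop where
  continuousOn : ContinuousOn Ξ (Ioi 0)
  exists_hasLeadingTerm : ∀ v, IsSignomial v → ∃ V, HasLeadingTerm V ∧ ∀ x, 0 < x → v x = V (Ξ x)

namespace IsEndCoordinate

lemma of_leftInvOn {Ξ J : ℝ → ℝ} (hΞ : ContinuousOn Ξ (Ioi 0)) (hJ : LeftInvOn J Ξ (Ioi 0))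
    (h : ∀ v, IsSignomial v → HasLeadingTerm (v ∘ J)) : IsEndCoordinate Ξ :=
  ⟨hΞ, fun v hv ↦ ⟨v ∘ J, h v hv, fun _ hx ↦ (congrArg v (hJ hx)).symm⟩⟩

lemma id : IsEndCoordinate fun x ↦ x :=
  of_leftInvOn continuousOn_id (fun _ _ ↦ rfl) fun _ hv ↦ hv.hasLeadingTerm

lemma inv : IsEndCoordinate fun x ↦ x⁻¹ :=
  of_leftInvOn (continuousOn_inv₀.mono fun _ hx ↦ (mem_Ioi.1 hx).ne') (fun x _ ↦ inv_inv x)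
    fun _ hv ↦ hv.comp_inv.hasLeadingTerm

lemma of_analyticAt {Ξ J : ℝ → ℝ} (hΞ : ContinuousOn Ξ (Ioi 0)) (hJ : LeftInvOn J Ξ (Ioi 0))
    (hJa : AnalyticAt ℝ J 0) (hJ0 : 0 < J 0) (hΞ0 : Ξ (J 0) = 0) : IsEndCoordinate Ξ := by
  refine of_leftInvOn hΞ hJ fun v hv ↦ ?_
  refine hasLeadingTerm_of_analyticAt ((hv.analyticAt hJ0).comp hJa) fun h ↦ ?_
  refine hv.not_eventually_eq_zero hJ0 ?_
  have hlim : Tendsto Ξ (𝓝 (J 0)) (𝓝 0) := by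
    simpa only [ContinuousAt, hΞ0] using hΞ.continuousAt (Ioi_mem_nhds hJ0)
  filter_upwards [hlim.eventually h, Ioi_mem_nhds hJ0] with x hx hpos
  rwa [Function.comp_apply, hJ hpos] at hx

lemma sub_const {x₀ : ℝ} (hx₀ : 0 < x₀) : IsEndCoordinate fun x ↦ x - x₀ :=
  of_analyticAt (J := fun ξ ↦ ξ + x₀) (by fun_prop) (fun x _ ↦ by simp) (by fun_prop)
    (by simpa) (by simp)

lemma const_sub {x₀ : ℝ} (hx₀ : 0 < x₀) : IsEndCoordinate fun x ↦ x₀ - x :=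
  of_analyticAt (J := fun ξ ↦ x₀ - ξ) (by fun_prop) (fun x _ ↦ by simp) (by fun_prop)
    (by simpa) (by simp)

end IsEndCoordinate

end Signomial

/-! ### Zeros of fibre signomials near an end -/

section NewtonPolygon

variable {K L : Type*} {V : K → ℝ → ℝ} {W : L → ℝ → ℝ}

lemma HasLeadingTerm.rpow_mul {V : ℝ → ℝ} (hV : HasLeadingTerm V) (a : ℝ) :
    HasLeadingTerm fun ξ ↦ ξ ^ a * V ξ := by
  obtain ⟨ν, c, δ, w, hc, hδ, hw, h⟩ := hV
  refine ⟨a + ν, c, δ, w, hc, hδ, hw, ?_⟩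
  filter_upwards [h, self_mem_nhdsWithin] with ξ h hξ
  rw [h, Real.rpow_add hξ, mul_assoc]

lemma exists_eq_rpow_mul_of_le {V w : ℝ → ℝ} {ν c δ m : ℝ} (hδ : 0 < δ)
    (hw : IsGenPowerSeries δ w) (hV : ∀ᶠ ξ in 𝓝[>] 0, V ξ = ξ ^ ν * (c + w ξ)) (hm : m ≤ ν) :
    ∃ θ > 0, ∃ A, IsGenPowerSeries θ A ∧
      ∀ᶠ ξ in 𝓝[>] 0, V ξ = ξ ^ m * ((if ν = m then c else 0) + A ξ) := by
  rcases hm.eq_or_lt with rfl | hm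
  · exact ⟨δ, hδ, w, hw, by simpa using hV⟩
  refine ⟨ν - m, sub_pos.2 hm, fun ξ ↦ 1 * ξ ^ (ν - m) * (c + w ξ), ?_, ?_⟩
  · simpa using (IsGenPowerSeries.const_mul_rpow 1 (ν - m)).mul
      ((IsGenPowerSeries.const c).add (hw.mono hδ.le))
  · filter_upwards [hV, self_mem_nhdsWithin] with ξ h hξ
    rw [h, if_neg hm.ne', zero_add, one_mul, ← mul_assoc, ← Real.rpow_add hξ, add_sub_cancel]

lemma exists_pos_forall_le [Finite K] {r : K → ℝ} (hr : ∀ k, 0 < r k) : ∃ ε > 0, ∀ k, ε ≤ r k := by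
  have h : ∀ᶠ ε in 𝓝[>] (0 : ℝ), ∀ k, ε ≤ r k := eventually_all.2 fun k ↦ by
    filter_upwards [Ioc_mem_nhdsGT (hr k)] with ε hε using hε.2
  obtain ⟨ε, h, hε⟩ := (h.and self_mem_nhdsWithin).exists
  exact ⟨ε, hε, h⟩

lemma exists_common_leading_exponent [Finite K] (hV : ∀ k, HasLeadingTerm (V k)) :
    ∃ (m : ℝ) (c : K → ℝ) (θ : ℝ) (A : K → ℝ → ℝ), (Nonempty K → ∃ k, c k ≠ 0) ∧ 0 < θ ∧
      (∀ k, IsGenPowerSeries θ (A k)) ∧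
      ∀ᶠ ξ in 𝓝[>] 0, ∀ k, V k ξ = ξ ^ m * (c k + A k ξ) := by
  choose ν c δ w hc hδ hw hV using hV
  obtain ⟨m, hm, hmin⟩ : ∃ m, (∀ k, m ≤ ν k) ∧ (Nonempty K → ∃ k, ν k = m) := by
    cases isEmpty_or_nonempty K with
    | inl h => exact ⟨0, isEmptyElim, fun h' ↦ (not_isEmpty_iff.2 h' h).elim⟩
    | inr _ =>
      obtain ⟨k, hk⟩ := Finite.exists_min ν
      exact ⟨ν k, hk, fun _ ↦ ⟨k, rfl⟩⟩
  choose θ hθ A hA hVA using fun k ↦ exists_eq_rpow_mul_of_le (hδ k) (hw k) (hV k) (hm k)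
  obtain ⟨ε, hε, hεθ⟩ := exists_pos_forall_le hθ
  refine ⟨m, fun k ↦ if ν k = m then c k else 0, ε, A, fun h ↦ ?_, hε,
    fun k ↦ (hA k).mono (hεθ k), eventually_all.2 hVA⟩
  obtain ⟨k, hk⟩ := hmin h
  exact ⟨k, by simpa [hk] using hc k⟩

lemma exists_gap_of_hasLeadingTerm [Fintype K] [Fintype L] [Nonempty K]
    (hV : ∀ k, HasLeadingTerm (V k)) (hW : ∀ l, HasLeadingTerm (W l)) {e : K → ℝ}
    (he : Function.Injective e) (e' : L → ℝ) {c : ℝ} (hc : 0 < c) :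
    ∃ C > 0, ∃ N : ℝ, ∀ᶠ q : ℝ × ℝ in 𝓝[>] 0 ×ˢ 𝓝 c, ∑ k, V k q.1 * q.2 ^ e k = 0 →
      |∑ l, W l q.1 * q.2 ^ e' l| < C * q.1 ^ N → ∑ l, W l q.1 * q.2 ^ e' l = 0 := by
  obtain ⟨m, a, θ, A, ha, hθ, hA, hVA⟩ := exists_common_leading_exponent hV
  obtain ⟨m', b, θ', B, -, hθ', hB, hWB⟩ := exists_common_leading_exponent hW
  have hpow (α : ℝ) : AnalyticAt ℝ (fun z ↦ (z + c) ^ α) 0 :=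
    (analyticAt_rpow_const α hc).fun_comp_of_eq (by fun_prop) (zero_add c)
  have hlim : Tendsto (fun r ↦ r - c) (𝓝 c) (𝓝 0) := by
    simpa using (continuous_sub_right c).tendsto c
  have hF : ¬ ∀ᶠ z in 𝓝 0, ∑ k, a k * (z + c) ^ e k = 0 := fun h ↦
    (isSignomial_sum he (ha ‹_›)).not_eventually_eq_zero hc <| by simpa using hlim.eventually h
  obtain ⟨C, hC, N, hgap⟩ := exists_zeroLocus_gap
    (Finset.analyticAt_fun_sum _ fun k _ ↦ analyticAt_const.fun_mul (hpow (e k))) hF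
    (fun k ↦ hpow (e k)) hθ hA (B := fun l ξ ↦ b l + B l ξ)
    (fun l ↦ (IsGenPowerSeries.const _).add ((hB l).mono hθ'.le)) fun l ↦ hpow (e' l)
  refine ⟨C, hC, N + m', ?_⟩
  filter_upwards [(tendsto_id.prodMap hlim).eventually hgap, hVA.prod_inl _, hWB.prod_inl _,
    Eventually.prod_inl self_mem_nhdsWithin (𝓝 c)] with q hq hVq hWq hq0
  have hpos (α : ℝ) : 0 < q.1 ^ α := Real.rpow_pos_of_pos hq0 α
  simp only [Prod.map, id, sub_add_cancel, ← Finset.sum_add_distrib, ← add_mul] at hq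
  simp only [hVq, hWq, mul_assoc, ← Finset.mul_sum, mul_eq_zero, (hpos _).ne', false_or, abs_mul,
    abs_of_pos (hpos _), Real.rpow_add (mem_Ioi.1 hq0)]
  intro h0 hlt
  exact hq h0 (lt_of_mul_lt_mul_left (by linarith) (hpos m').le)

lemma exists_comparable_pair [Fintype K] [Nonempty K] {t e : K → ℝ} {a M : ℝ} (ht : ∀ k, 0 < t k)
    (ha : 0 < a) (hae : ∀ k, a ≤ |e k|) (heM : ∀ k, |e k| ≤ M) (h0 : ∑ k, e k * t k = 0) :
    ∃ i j, i ≠ j ∧ t j ≤ t i ∧ a * t i ≤ Fintype.card K * M * t j := by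
  classical
  obtain ⟨i, hi⟩ := Finite.exists_max t
  rw [← Finset.add_sum_erase _ _ (Finset.mem_univ i), add_eq_zero_iff_eq_neg] at h0
  have hei : a * t i ≤ |e i * t i| := by
    rw [abs_mul, abs_of_pos (ht i)]
    exact mul_le_mul_of_nonneg_right (hae i) (ht i).le
  have hM : 0 ≤ M := (abs_nonneg _).trans (heM i)
  have hne : (Finset.univ.erase i).Nonempty := by
    by_contra h
    rw [Finset.not_nonempty_iff_eq_empty.1 h] at h0
    simp only [h0, Finset.sum_empty, neg_zero, abs_zero] at hei
    exact hei.not_gt (mul_pos ha (ht i))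
  obtain ⟨j, hj, hjmax⟩ := Finset.exists_max_image _ t hne
  refine ⟨i, j, (Finset.ne_of_mem_erase hj).symm, hi j, ?_⟩
  calc a * t i ≤ ∑ k ∈ Finset.univ.erase i, |e k * t k| := by
        rw [h0, abs_neg] at hei
        exact hei.trans (Finset.abs_sum_le_sum_abs _ _)
    _ ≤ (Finset.univ.erase i).card • (M * t j) := Finset.sum_le_card_nsmul _ _ _ fun k hk ↦ by
        rw [abs_mul, abs_of_pos (ht k)]
        exact mul_le_mul (heM k) (hjmax k hk) (ht k).le hM
    _ ≤ Fintype.card K * M * t j := by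
        rw [nsmul_eq_mul, mul_assoc]
        gcongr
        · exact mul_nonneg hM (ht j).le
        · exact Finset.card_le_univ _

lemma sum_rpow_mul_mul_rpow [Fintype K] (v e : K → ℝ) (μ : ℝ) {ξ r : ℝ} (hξ : 0 < ξ)
    (hr : 0 < r) : ∑ k, ξ ^ (μ * e k) * v k * r ^ e k = ∑ k, v k * (ξ ^ μ * r) ^ e k := by
  refine Finset.sum_congr rfl fun k _ ↦ ?_
  rw [Real.mul_rpow (Real.rpow_nonneg hξ.le _) hr.le, Real.rpow_mul hξ.le]
  ring

lemma eq_rpow_mul_of_rpow_mul_rpow_eq {ξ y ρ a b : ℝ} (hξ : 0 < ξ) (hy : 0 < y) (hb : b ≠ 0)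
    (h : ξ ^ a * y ^ b = ρ) : y = ξ ^ (-a / b) * ρ ^ b⁻¹ := by
  rw [← h, Real.mul_rpow (Real.rpow_nonneg hξ.le _) (Real.rpow_nonneg hy.le _),
    ← Real.rpow_mul hξ.le, ← Real.rpow_mul hy.le, mul_inv_cancel₀ hb, Real.rpow_one, ← mul_assoc,
    ← Real.rpow_add hξ, neg_div, ← div_eq_mul_inv, neg_add_cancel, Real.rpow_zero, one_mul]

lemma exists_forall_abs_div_rpow_mem_Icc [Finite K] (hV : ∀ k, HasLeadingTerm (V k)) :
    ∃ (ν : K → ℝ) (a b : ℝ), 0 < a ∧ 0 < b ∧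
      ∀ᶠ ξ in 𝓝[>] 0, ∀ k, |V k ξ / ξ ^ ν k| ∈ Icc a b := by
  choose ν hν using fun k ↦ (hV k).exists_isTheta_rpow
  choose A hA hlow using fun k ↦ (hν k).isBigO_symm.exists_pos
  choose B hB hup using fun k ↦ (hν k).isBigO.exists_pos
  obtain ⟨a, ha, haA⟩ := exists_pos_forall_le fun k ↦ inv_pos.2 (hA k)
  obtain ⟨b, hb, hbB⟩ := exists_pos_forall_le fun k ↦ inv_pos.2 (hB k)
  refine ⟨ν, a, b⁻¹, ha, inv_pos.2 hb, eventually_all.2 fun k ↦ ?_⟩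
  filter_upwards [(hlow k).bound, (hup k).bound, self_mem_nhdsWithin] with ξ hlow hup hξ
  have hpos : 0 < ξ ^ ν k := Real.rpow_pos_of_pos hξ _
  rw [Real.norm_of_nonneg hpos.le, Real.norm_eq_abs] at hlow hup
  rw [abs_div, abs_of_pos hpos]
  exact ⟨(haA k).trans (by rwa [le_div_iff₀ hpos, inv_mul_le_iff₀ (hA k)]),
    ((div_le_iff₀ hpos).2 hup).trans (le_inv_of_le_inv₀ hb (hbB k))⟩

-- A sum of monomials of different sizes cannot vanish, so at a root two of them are comparable;
-- this fixes the order of magnitude of the root, a slope of the Newton polygon.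
lemma exists_newton_slopes [Fintype K] [Nonempty K] (hV : ∀ k, HasLeadingTerm (V k)) {e : K → ℝ}
    (he : Function.Injective e) :
    ∃ S C : Set ℝ, S.Finite ∧ IsCompact C ∧ C ⊆ Ioi 0 ∧ ∀ᶠ ξ in 𝓝[>] 0, ∀ y, 0 < y →
      ∑ k, V k ξ * y ^ e k = 0 → ∃ μ ∈ S, ∃ r ∈ C, y = ξ ^ μ * r := by
  obtain ⟨ν, a, b, ha, hb, hab⟩ := exists_forall_abs_div_rpow_mem_Icc hV
  set η := a / (Fintype.card K * b)
  have hη : 0 < η := by positivity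
  let f (p : K × K) (ρ : ℝ) : ℝ := ρ ^ (e p.2 - e p.1)⁻¹
  refine ⟨range fun p : K × K ↦ -(ν p.2 - ν p.1) / (e p.2 - e p.1), ⋃ p, f p '' Icc η 1,
    finite_range _, isCompact_iUnion fun p ↦ isCompact_Icc.image_of_continuousOn fun ρ hρ ↦ ?_,
    iUnion_subset fun p ↦ ?_, ?_⟩
  · exact (Real.continuousAt_rpow_const _ _ (.inl (hη.trans_le hρ.1).ne')).continuousWithinAt
  · rintro _ ⟨ρ, hρ, rfl⟩
    exact Real.rpow_pos_of_pos (hη.trans_le hρ.1) _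
  filter_upwards [hab, self_mem_nhdsWithin] with ξ hab (hξ : 0 < ξ) y hy h0
  let t (k : K) : ℝ := ξ ^ ν k * y ^ e k
  have ht (k : K) : 0 < t k := mul_pos (Real.rpow_pos_of_pos hξ _) (Real.rpow_pos_of_pos hy _)
  have hsum : ∑ k, V k ξ / ξ ^ ν k * t k = 0 := by
    rw [← h0]
    refine Finset.sum_congr rfl fun k _ ↦ ?_
    rw [← mul_assoc, div_mul_cancel₀ _ (Real.rpow_pos_of_pos hξ _).ne']
  obtain ⟨i, j, hij, hle, hge⟩ :=
    exists_comparable_pair ht ha (fun k ↦ (hab k).1) (fun k ↦ (hab k).2) hsum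
  have hρ : ξ ^ (ν j - ν i) * y ^ (e j - e i) = t j / t i := by
    rw [Real.rpow_sub hξ, Real.rpow_sub hy, div_mul_div_comm]
  refine ⟨_, ⟨(i, j), rfl⟩, _, mem_iUnion.2 ⟨(i, j), mem_image_of_mem _ ⟨?_, ?_⟩⟩,
    eq_rpow_mul_of_rpow_mul_rpow_eq hξ hy (sub_ne_zero.2 (he.ne hij.symm)) hρ⟩
  · rwa [le_div_iff₀ (ht i), div_mul_eq_mul_div, div_le_iff₀' (by positivity)]
  · exact div_le_one_of_le₀ hle (ht i).le

end NewtonPolygon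

lemma eventually_prod_eventually_nhds {P : ℝ × ℝ → Prop} {c : ℝ} (hc : 0 < c)
    (h : ∀ᶠ q in 𝓝[>] 0 ×ˢ 𝓝 c, P q) :
    ∀ᶠ q in 𝓝[>] 0 ×ˢ 𝓝 c, q ∈ Ioi 0 ×ˢ Ioi 0 ∧ ∀ᶠ q' in 𝓝 q, q' ∈ Ioi 0 ×ˢ Ioi 0 ∧ P q' := by
  have hnhds : 𝓝[>] (0 : ℝ) ×ˢ 𝓝 c = 𝓝[Ioi 0 ×ˢ Ioi 0] (0, c) := by
    rw [nhdsWithin_prod_eq, nhdsWithin_eq_nhds.2 (Ioi_mem_nhds hc)]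
  rw [hnhds] at h ⊢
  filter_upwards [eventually_eventually_nhdsWithin.2 h, self_mem_nhdsWithin] with q hq hq0
  rw [eventually_nhdsWithin_iff] at hq
  refine ⟨hq0, ?_⟩
  filter_upwards [hq, (isOpen_Ioi.prod isOpen_Ioi).mem_nhds hq0] with q' h h0 using ⟨h0, h h0⟩

/-- A function `∑ β, κ β x * y ^ β` on the quadrant, regarded as a signomial in `y` whose
coefficients are nonzero signomials in `x`. -/
structure FiberSignomial where
  support : Finset ℝ
  coeff : ℝ → ℝ → ℝ
  isSignomial_coeff : ∀ β ∈ support, IsSignomial (coeff β)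

namespace FiberSignomial

/-- The value of a fibre signomial; it is meaningful on the open quadrant only. -/
def eval (f : FiberSignomial) (p : ℝ × ℝ) : ℝ := ∑ β ∈ f.support, f.coeff β p.1 * p.2 ^ β

variable {f g : FiberSignomial} {p : ℝ × ℝ} {Ξ : ℝ → ℝ} {c : ℝ}

lemma continuousAt_eval (f : FiberSignomial) (h₁ : 0 < p.1) (h₂ : 0 < p.2) :
    ContinuousAt f.eval p := by
  refine tendsto_finsetSum _ fun β hβ ↦ ?_
  exact (((f.isSignomial_coeff β hβ).analyticAt h₁).continuousAt.comp continuousAt_fst).mul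
    (continuousAt_snd.rpow_const (.inl h₂.ne'))

/-- If `p` is a common zero of `f` and `g`, then `g` vanishes on the zero set of `f` near `p`. -/
def ZerosLocallyImply (f g : FiberSignomial) (p : ℝ × ℝ) : Prop :=
  f.eval p = 0 → g.eval p = 0 → ∀ᶠ p' in 𝓝 p, f.eval p' = 0 → g.eval p' = 0

lemma exists_hasLeadingTerm_coeff (f : FiberSignomial) (hΞ : IsEndCoordinate Ξ) :
    ∃ V : f.support → ℝ → ℝ, (∀ β, HasLeadingTerm (V β)) ∧
      ∀ p : ℝ × ℝ, 0 < p.1 → f.eval p = ∑ β, V β (Ξ p.1) * p.2 ^ (β : ℝ) := by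
  choose V hV hVf using fun β : f.support ↦
    hΞ.exists_hasLeadingTerm _ (f.isSignomial_coeff β β.2)
  refine ⟨V, hV, fun p hp ↦ ?_⟩
  rw [eval, ← Finset.sum_coe_sort]
  exact Finset.sum_congr rfl fun β _ ↦ by rw [hVf β _ hp]

lemma eventually_zerosLocallyImply_rpow_mul (hΞ : IsEndCoordinate Ξ) (hf : f.support.Nonempty)
    (g : FiberSignomial) (μ : ℝ) (hc : 0 < c) :
    ∀ᶠ q : ℝ × ℝ in 𝓝[>] 0 ×ˢ 𝓝 c, ∀ x, 0 < x → Ξ x = q.1 →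
      f.ZerosLocallyImply g (x, q.1 ^ μ * q.2) := by
  have : Nonempty f.support := hf.to_subtype
  obtain ⟨V, hV, hVf⟩ := f.exists_hasLeadingTerm_coeff hΞ
  obtain ⟨W, hW, hWg⟩ := g.exists_hasLeadingTerm_coeff hΞ
  obtain ⟨C, hC, N, hgap⟩ := exists_gap_of_hasLeadingTerm (fun β ↦ (hV β).rpow_mul (μ * β))
    (fun β ↦ (hW β).rpow_mul (μ * β)) Subtype.val_injective Subtype.val hc
  filter_upwards [eventually_prod_eventually_nhds hc hgap]
    with ⟨ξ, r⟩ ⟨⟨hξ, hr⟩, hq⟩ x hx hxξ hf0 hg0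
  subst hxξ
  simp only [mem_Ioi] at hξ hr
  have hy : 0 < Ξ x ^ μ * r := mul_pos (Real.rpow_pos_of_pos hξ μ) hr
  have hΞx : ContinuousAt (fun p : ℝ × ℝ ↦ Ξ p.1) (x, Ξ x ^ μ * r) :=
    (hΞ.continuousOn.continuousAt (Ioi_mem_nhds hx)).comp continuousAt_fst
  have hΞrpow (α : ℝ) : ContinuousAt (fun p : ℝ × ℝ ↦ Ξ p.1 ^ α) (x, Ξ x ^ μ * r) :=
    hΞx.rpow_const (.inl hξ.ne')
  have hlim : Tendsto (fun p : ℝ × ℝ ↦ (Ξ p.1, p.2 / Ξ p.1 ^ μ)) (𝓝 (x, Ξ x ^ μ * r))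
      (𝓝 (Ξ x, r)) := by
    have h : ContinuousAt (fun p : ℝ × ℝ ↦ (Ξ p.1, p.2 / Ξ p.1 ^ μ)) (x, Ξ x ^ μ * r) :=
      hΞx.prodMk (continuousAt_snd.div (hΞrpow μ) (Real.rpow_pos_of_pos hξ μ).ne')
    rwa [ContinuousAt, mul_div_cancel_left₀ _ (Real.rpow_pos_of_pos hξ μ).ne'] at h
  have hsmall : ∀ᶠ p in 𝓝 (x, Ξ x ^ μ * r), |g.eval p| < C * Ξ p.1 ^ N :=
    (g.continuousAt_eval hx hy).abs.eventually_lt (continuousAt_const.mul (hΞrpow N)) <| by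
      rw [hg0, abs_zero]
      exact mul_pos hC (Real.rpow_pos_of_pos hξ N)
  filter_upwards [hlim.eventually hq, hsmall, continuousAt_fst.eventually_const_lt hx]
    with p ⟨⟨hp1, hp2⟩, hp⟩ hlt hpx hfp
  simp only [mem_Ioi] at hp1 hp2
  rw [sum_rpow_mul_mul_rpow _ _ _ hp1 hp2, sum_rpow_mul_mul_rpow _ _ _ hp1 hp2,
    mul_div_cancel₀ _ (Real.rpow_pos_of_pos hp1 μ).ne', ← hVf _ hpx, ← hWg _ hpx] at hp
  exact hp hfp hlt

lemma eventually_zerosLocallyImply (hΞ : IsEndCoordinate Ξ) (hf : f.support.Nonempty)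
    (g : FiberSignomial) :
    ∀ᶠ ξ in 𝓝[>] 0, ∀ x, 0 < x → Ξ x = ξ → ∀ y, 0 < y → f.ZerosLocallyImply g (x, y) := by
  have : Nonempty f.support := hf.to_subtype
  obtain ⟨V, hV, hVf⟩ := f.exists_hasLeadingTerm_coeff hΞ
  obtain ⟨S, C, hS, hC, hC0, hroot⟩ := exists_newton_slopes hV Subtype.val_injective
  have hloc : ∀ μ ∈ S, ∀ᶠ q : ℝ × ℝ in 𝓝[>] 0 ×ˢ 𝓝ˢ C, ∀ x, 0 < x → Ξ x = q.1 →
      f.ZerosLocallyImply g (x, q.1 ^ μ * q.2) := fun μ _ ↦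
    hC.mem_prod_nhdsSet_of_forall fun r hr ↦
      eventually_zerosLocallyImply_rpow_mul hΞ hf g μ (hC0 hr)
  filter_upwards [hroot, (eventually_all_finite hS).2 fun μ hμ ↦ (hloc μ hμ).curry]
    with ξ hroot hloc x hx hxξ y hy h0
  obtain ⟨μ, hμ, r, hr, rfl⟩ := hroot y hy (by rw [← h0, hVf _ hx, hxξ])
  exact (hloc μ hμ).self_of_nhdsSet r hr x hx hxξ h0

end FiberSignomial

/-! ### Derivation and reflection of fibre signomials -/

namespace FiberSignomial

variable {f : FiberSignomial} {x y β : ℝ} {p : ℝ × ℝ}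

lemma eval_of_support_eq_empty (hf : f.support = ∅) (p : ℝ × ℝ) : f.eval p = 0 := by
  simp [eval, hf]

open Classical in
/-- The smallest exponent of `y`, with the positive junk value `1` for the empty signomial. -/
def lowestExponent (f : FiberSignomial) : ℝ :=
  if h : f.support.Nonempty then f.support.min' h else 1

lemma lowestExponent_mem (hf : f.support.Nonempty) : f.lowestExponent ∈ f.support := by
  rw [lowestExponent, dif_pos hf]
  exact f.support.min'_mem hf

lemma lowestExponent_le (hβ : β ∈ f.support) : f.lowestExponent ≤ β := by
  rw [lowestExponent, dif_pos ⟨β, hβ⟩]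
  exact f.support.min'_le β hβ

/-- The fibre signomial divided by its lowest power of `y`. -/
def normalized (f : FiberSignomial) (p : ℝ × ℝ) : ℝ := p.2 ^ (-f.lowestExponent) * f.eval p

lemma normalized_eq_sum (f : FiberSignomial) (hp : 0 < p.2) :
    f.normalized p = ∑ β ∈ f.support, f.coeff β p.1 * p.2 ^ (β - f.lowestExponent) := by
  simp only [normalized, eval, Finset.mul_sum, sub_eq_add_neg, Real.rpow_add hp]
  exact Finset.sum_congr rfl fun β _ ↦ by ring

lemma sign_normalized (f : FiberSignomial) (hp : 0 < p.2) :
    SignType.sign (f.normalized p) = SignType.sign (f.eval p) := by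
  rw [normalized, sign_mul, sign_pos (Real.rpow_pos_of_pos hp _), one_mul]

lemma normalized_eq_zero_iff (f : FiberSignomial) (hp : 0 < p.2) :
    f.normalized p = 0 ↔ f.eval p = 0 := by
  rw [← sign_eq_zero_iff, f.sign_normalized hp, sign_eq_zero_iff]

lemma rpow_lowestExponent_mul_normalized (f : FiberSignomial) (hp : 0 < p.2) :
    p.2 ^ f.lowestExponent * f.normalized p = f.eval p := by
  rw [normalized, ← mul_assoc, ← Real.rpow_add hp, add_neg_cancel, Real.rpow_zero, one_mul]

lemma continuousAt_normalized (f : FiberSignomial) (h₁ : 0 < p.1) (h₂ : 0 < p.2) :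
    ContinuousAt f.normalized p :=
  (continuousAt_snd.rpow_const (.inl h₂.ne')).mul (f.continuousAt_eval h₁ h₂)

open Classical in
/-- The Euler derivative `y ∂/∂y` of `f.normalized`; it has one term less than `f`. -/
def fiberDeriv (f : FiberSignomial) : FiberSignomial where
  support := (f.support.erase f.lowestExponent).image (· - f.lowestExponent)
  coeff β x := β * f.coeff (β + f.lowestExponent) x
  isSignomial_coeff β hβ := by
    obtain ⟨b, hb, rfl⟩ := Finset.mem_image.1 hβ
    rw [sub_add_cancel]
    exact (f.isSignomial_coeff b (Finset.mem_of_mem_erase hb)).const_mul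
      (sub_ne_zero.2 (Finset.ne_of_mem_erase hb))

lemma card_support_fiberDeriv (f : FiberSignomial) :
    f.fiberDeriv.support.card = f.support.card - 1 := by
  classical
  rw [fiberDeriv, Finset.card_image_of_injective _ sub_left_injective]
  obtain h | h := f.support.eq_empty_or_nonempty
  · simp [h]
  · rw [Finset.card_erase_of_mem (lowestExponent_mem h)]

lemma card_support_iterate_fiberDeriv (f : FiberSignomial) (n : ℕ) :
    (fiberDeriv^[n] f).support.card = f.support.card - n := by
  induction n with
  | zero => rfl
  | succ n ih => rw [Function.iterate_succ_apply', card_support_fiberDeriv, ih, Nat.sub_sub]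

lemma eval_iterate_fiberDeriv_of_le {n : ℕ} (hn : f.support.card ≤ n) (p : ℝ × ℝ) :
    (fiberDeriv^[n] f).eval p = 0 :=
  eval_of_support_eq_empty (Finset.card_eq_zero.1 <| by
    rw [card_support_iterate_fiberDeriv, Nat.sub_eq_zero_of_le hn]) p

lemma lowestExponent_fiberDeriv_pos (f : FiberSignomial) : 0 < f.fiberDeriv.lowestExponent := by
  classical
  by_cases h : f.fiberDeriv.support.Nonempty
  · obtain ⟨b, hb, hb'⟩ := Finset.mem_image.1 (lowestExponent_mem h)
    rw [← hb', sub_pos]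
    exact (lowestExponent_le (Finset.mem_of_mem_erase hb)).lt_of_ne' (Finset.ne_of_mem_erase hb)
  · rw [lowestExponent, dif_neg h]
    exact one_pos

lemma eval_fiberDeriv (f : FiberSignomial) (p : ℝ × ℝ) : f.fiberDeriv.eval p =
    ∑ β ∈ f.support,
      (β - f.lowestExponent) * f.coeff β p.1 * p.2 ^ (β - f.lowestExponent) := by
  classical
  rw [eval, fiberDeriv, Finset.sum_image sub_left_injective.injOn,
    ← Finset.sum_erase (a := f.lowestExponent) f.support]
  · simp only [sub_add_cancel]
  · rw [sub_self, zero_mul, zero_mul]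

lemma hasDerivAt_normalized (f : FiberSignomial) (x : ℝ) (hy : 0 < y) :
    HasDerivAt (fun t ↦ f.normalized (x, t)) (y⁻¹ * f.fiberDeriv.eval (x, y)) y := by
  have hsum : HasDerivAt (fun t ↦ ∑ β ∈ f.support, f.coeff β x * t ^ (β - f.lowestExponent))
      (∑ β ∈ f.support, f.coeff β x *
        ((β - f.lowestExponent) * y ^ (β - f.lowestExponent - 1))) y :=
    HasDerivAt.fun_sum fun β _ ↦ (Real.hasDerivAt_rpow_const (.inl hy.ne')).const_mul _
  have heq : (fun t ↦ f.normalized (x, t)) =ᶠ[𝓝 y]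
      fun t ↦ ∑ β ∈ f.support, f.coeff β x * t ^ (β - f.lowestExponent) := by
    filter_upwards [Ioi_mem_nhds hy] with t ht using f.normalized_eq_sum ht
  refine (hsum.congr_of_eventuallyEq heq).congr_deriv ?_
  rw [f.eval_fiberDeriv, Finset.mul_sum]
  refine Finset.sum_congr rfl fun β _ ↦ ?_
  rw [Real.rpow_sub_one hy.ne']
  ring

lemma isPowerTower_normalized (f : FiberSignomial) (x : ℝ) :
    IsPowerTower (fun l ↦ (fiberDeriv^[l + 1] f).lowestExponent)
      (fun l y ↦ (fiberDeriv^[l] f).normalized (x, y)) f.support.card where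
  exponent_pos l := by
    rw [Function.iterate_succ_apply']
    exact lowestExponent_fiberDeriv_pos _
  hasDerivAt l t ht := by
    simp only [Function.iterate_succ_apply']
    refine ((fiberDeriv^[l] f).hasDerivAt_normalized x ht).congr_deriv ?_
    rw [Real.rpow_sub_one ht.ne', ← rpow_lowestExponent_mul_normalized _ ht]
    ring
  eq_zero l hl t _ := by rw [normalized, eval_iterate_fiberDeriv_of_le hl, mul_zero]

/-- A family of fibre signomials stable under the Euler derivative. -/
def IsDerivClosed (F : Set FiberSignomial) : Prop :=
  ∀ f ∈ F, f.support.Nonempty → f.fiberDeriv ∈ F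

lemma exists_finite_isDerivClosed {F : Set FiberSignomial} (hF : F.Finite) :
    ∃ F', F'.Finite ∧ F ⊆ F' ∧ IsDerivClosed F' := by
  refine ⟨⋃ f ∈ F, (fiberDeriv^[·] f) '' Iic f.support.card,
    hF.biUnion fun f _ ↦ (finite_Iic _).image _, fun f hf ↦ ?_, fun g hg hne ↦ ?_⟩
  · exact mem_biUnion hf ⟨0, Nat.zero_le _, rfl⟩
  · simp only [mem_iUnion] at hg ⊢
    obtain ⟨f, hf, l, _, rfl⟩ := hg
    have hpos := Finset.card_pos.2 hne
    rw [card_support_iterate_fiberDeriv] at hpos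
    exact ⟨f, hf, l + 1, by simp only [mem_Iic]; lia, Function.iterate_succ_apply' _ _ _⟩

open Classical in
/-- The fibre signomial obtained by the substitution `y ↦ y⁻¹`. -/
def reflect (f : FiberSignomial) : FiberSignomial where
  support := f.support.image (-·)
  coeff β := f.coeff (-β)
  isSignomial_coeff β hβ := by
    obtain ⟨b, hb, rfl⟩ := Finset.mem_image.1 hβ
    rw [neg_neg]
    exact f.isSignomial_coeff b hb

lemma eval_reflect (f : FiberSignomial) (x : ℝ) (hy : 0 < y) :
    f.reflect.eval (x, y⁻¹) = f.eval (x, y) := by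
  simp only [eval, reflect, Finset.sum_image neg_injective.injOn, neg_neg, Real.inv_rpow hy.le,
    Real.rpow_neg hy.le, inv_inv]

end FiberSignomial

/-! ### Sign vectors along the fibres -/

section Sign

lemma eventually_sign_eq {X : Type*} {l : Filter X} {φ : X → ℝ} {a : ℝ} (hφ : Tendsto φ l (𝓝 a))
    (ha : a ≠ 0) : ∀ᶠ q in l, SignType.sign (φ q) = SignType.sign a := by
  obtain ha | ha := ha.lt_or_gt
  · filter_upwards [hφ.eventually_lt_const ha] with q hq
    rw [sign_neg ha, sign_neg hq]
  · filter_upwards [hφ.eventually_const_lt ha] with q hq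
    rw [sign_pos ha, sign_pos hq]

lemma eq_of_isPreconnected_of_eventually_eq {X α : Type*} [TopologicalSpace X] {s : Set X}
    {σ : X → α} (hs : IsPreconnected s) (hσ : ∀ x ∈ s, ∀ᶠ x' in 𝓝[s] x, σ x' = σ x) {x x' : X}
    (hx : x ∈ s) (hx' : x' ∈ s) : σ x = σ x' := by
  let _ : TopologicalSpace α := ⊥
  have : DiscreteTopology α := ⟨rfl⟩
  refine hs.constant (fun z hz ↦ ?_) hx hx'
  rw [ContinuousWithinAt, nhds_discrete, tendsto_pure]
  exact hσ z hz

end Sign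

section StrictMonoBox

variable {φ : ℝ × ℝ → ℝ} {P : ℝ × ℝ → Prop} {x y : ℝ}

lemma exists_strictMono_box (hφ0 : φ (x, y) = 0) (hP : ∀ᶠ p in 𝓝 (x, y), P p)
    (hcont : ∀ᶠ p in 𝓝 (x, y), ContinuousAt φ p)
    (hderiv : ∀ᶠ p in 𝓝 (x, y), ∃ d > 0, HasDerivAt (fun t ↦ φ (p.1, t)) d p.2) :
    ∃ a b, a < y ∧ y < b ∧ ∀ᶠ x' in 𝓝 x, (∀ t ∈ Icc a b, P (x', t)) ∧
      StrictMonoOn (fun t ↦ φ (x', t)) (Icc a b) ∧ φ (x', a) < 0 ∧ 0 < φ (x', b) := by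
  have hall := hP.and (hcont.and hderiv)
  rw [nhds_prod_eq, eventually_prod_iff] at hall
  obtain ⟨p₁, hp₁, p₂, hp₂, hall⟩ := hall
  obtain ⟨ε, hε, hp₂⟩ := (nhds_basis_Icc_pos y).eventually_iff.1 hp₂
  have hmono {x'} (hx' : p₁ x') : StrictMonoOn (fun t ↦ φ (x', t)) (Icc (y - ε) (y + ε)) := by
    have hd (t) (ht : t ∈ Icc (y - ε) (y + ε)) := (hall hx' (hp₂ ht)).2.2
    refine strictMonoOn_of_deriv_pos (convex_Icc _ _) (fun t ht ↦ ?_) fun t ht ↦ ?_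
    · obtain ⟨d, -, hd⟩ := hd t ht
      exact hd.continuousAt.continuousWithinAt
    · obtain ⟨d, hd0, hd⟩ := hd t (interior_subset ht)
      rwa [hd.deriv]
  have hx := hp₁.self_of_nhds
  have hya : y - ε < y := sub_lt_self y hε
  have hyb : y < y + ε := lt_add_of_pos_right y hε
  have hymem : y ∈ Icc (y - ε) (y + ε) := ⟨hya.le, hyb.le⟩
  have ha := left_mem_Icc.2 (hya.trans hyb).le
  have hb := right_mem_Icc.2 (hya.trans hyb).le
  have hφ {t} (ht : t ∈ Icc (y - ε) (y + ε)) : ContinuousAt (fun x' ↦ φ (x', t)) x :=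
    (hall hx (hp₂ ht)).2.1.comp (f := fun x' ↦ (x', t)) (by fun_prop)
  refine ⟨y - ε, y + ε, hya, hyb, ?_⟩
  filter_upwards [hp₁, (hφ ha).eventually_lt_const ((hmono hx ha hymem hya).trans_eq hφ0),
    (hφ hb).eventually_const_lt (hφ0.symm.trans_lt (hmono hx hymem hb hyb))] with x' hx' hφa hφb
  exact ⟨fun t ht ↦ (hall hx' (hp₂ ht)).1, hmono hx', hφa, hφb⟩

variable {α : Type*} {σ : ℝ × ℝ → α}

lemma eventually_exists_eq_of_strictMono (hy : 0 < y) (hφ0 : φ (x, y) = 0)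
    (hσ0 : ∀ᶠ p in 𝓝 (x, y), φ p = 0 → σ p = σ (x, y))
    (hcont : ∀ᶠ p in 𝓝 (x, y), ContinuousAt φ p)
    (hderiv : ∀ᶠ p in 𝓝 (x, y), ∃ d > 0, HasDerivAt (fun t ↦ φ (p.1, t)) d p.2) :
    ∀ᶠ x' in 𝓝 x, ∃ t > 0, σ (x', t) = σ (x, y) := by
  have hpos : ∀ᶠ p : ℝ × ℝ in 𝓝 (x, y), 0 < p.2 := continuousAt_snd.eventually_const_lt hy
  obtain ⟨a, b, hay, hyb, hbox⟩ :=
    exists_strictMono_box hφ0 (hσ0.and (hcont.and hpos)) hcont hderiv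
  filter_upwards [hbox] with x' ⟨hP, _, hφa, hφb⟩
  have hcont' : ContinuousOn (fun t ↦ φ (x', t)) (Icc a b) := fun t ht ↦
    ((hP t ht).2.1.comp (f := fun t ↦ (x', t)) (by fun_prop)).continuousWithinAt
  obtain ⟨t, ht, hφt⟩ := intermediate_value_Icc (hay.trans hyb).le hcont' ⟨hφa.le, hφb.le⟩
  exact ⟨t, (hP t ht).2.2, (hP t ht).1 hφt⟩

/- Off the zero curve of `φ` a point moves vertically, without crossing the curve, to the top or
bottom of the box and then horizontally to the fibre over `x`. -/
lemma eventually_exists_eq_fiber_of_strictMono (hy : 0 < y) (hφ0 : φ (x, y) = 0)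
    (hσ0 : ∀ᶠ p in 𝓝 (x, y), φ p = 0 → σ p = σ (x, y))
    (hσ : ∀ᶠ p in 𝓝 (x, y), φ p ≠ 0 → ∀ᶠ q in 𝓝 p, σ q = σ p)
    (hcont : ∀ᶠ p in 𝓝 (x, y), ContinuousAt φ p)
    (hderiv : ∀ᶠ p in 𝓝 (x, y), ∃ d > 0, HasDerivAt (fun t ↦ φ (p.1, t)) d p.2) :
    ∀ᶠ p in 𝓝 (x, y), ∃ t > 0, σ (x, t) = σ p := by
  have hpos : ∀ᶠ p : ℝ × ℝ in 𝓝 (x, y), 0 < p.2 := continuousAt_snd.eventually_const_lt hy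
  obtain ⟨a, b, hay, hyb, hbox⟩ :=
    exists_strictMono_box hφ0 (hσ0.and (hσ.and hpos)) hcont hderiv
  obtain ⟨hPx, -, hφa, hφb⟩ := hbox.self_of_nhds
  have ha := left_mem_Icc.2 (hay.trans hyb).le
  have hb := right_mem_Icc.2 (hay.trans hyb).le
  have hhor {c} (hc : c ∈ Icc a b) (hφc : φ (x, c) ≠ 0) : ∀ᶠ x' in 𝓝 x, σ (x', c) = σ (x, c) :=
    (Continuous.prodMk_left c).continuousAt.eventually ((hPx c hc).2.1 hφc)
  have hIcc : ∀ᶠ p : ℝ × ℝ in 𝓝 (x, y), p.2 ∈ Icc a b :=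
    continuousAt_snd.eventually (Icc_mem_nhds hay hyb)
  filter_upwards [continuousAt_fst.eventually (hbox.and ((hhor ha hφa.ne).and (hhor hb hφb.ne'))),
    hIcc] with ⟨x', t⟩ ⟨⟨hP, hmono, _⟩, hσa, hσb⟩ ht
  have hvert {c d} (hc : a ≤ c) (hcd : c ≤ d) (hd : d ≤ b)
      (hne : ∀ s ∈ Icc c d, φ (x', s) ≠ 0) : σ (x', c) = σ (x', d) :=
    eq_of_isPreconnected_of_eventually_eq (σ := fun s ↦ σ (x', s)) isPreconnected_Icc
      (fun s hs ↦ eventually_nhdsWithin_of_eventually_nhds <|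
        (Continuous.prodMk_right x').continuousAt.eventually
          ((hP s (Icc_subset_Icc hc hd hs)).2.1 (hne s hs)))
      (left_mem_Icc.2 hcd) (right_mem_Icc.2 hcd)
  obtain hlt | heq | hgt := lt_trichotomy (φ (x', t)) 0
  · refine ⟨a, (hPx a ha).2.2, hσa.symm.trans (hvert le_rfl ht.1 ht.2 fun s hs ↦ ?_)⟩
    exact ((hmono.monotoneOn ⟨hs.1, hs.2.trans ht.2⟩ ht hs.2).trans_lt hlt).ne
  · exact ⟨y, hy, ((hP t ht).1 heq).symm⟩
  · refine ⟨b, (hPx b hb).2.2, hσb.symm.trans (hvert ht.1 ht.2 le_rfl fun s hs ↦ ?_).symm⟩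
    exact (hgt.trans_le (hmono.monotoneOn ht ⟨ht.1.trans hs.1, hs.2⟩ hs.1)).ne'

end StrictMonoBox

namespace FiberSignomial

variable {F : Set FiberSignomial} {f : FiberSignomial} {x y : ℝ} {p : ℝ × ℝ} {Ξ : ℝ → ℝ}

/-- The signs at the point `p` of all members of `F`. -/
def signVector (F : Set FiberSignomial) (p : ℝ × ℝ) : F → SignType :=
  fun f ↦ SignType.sign (f.1.eval p)

/-- The sign vectors of `F` that occur on the fibre over `x`. -/
def fiberSignVectors (F : Set FiberSignomial) (x : ℝ) : Set (F → SignType) :=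
  {σ | ∃ y > 0, signVector F (x, y) = σ}

/-- Near the fibre over `x` no coefficient of a member of `F` degenerates, and common zeros of two
members on this fibre persist along the whole zero curve. -/
structure IsRegularFiber (F : Set FiberSignomial) (x : ℝ) : Prop where
  pos : 0 < x
  coeff_ne_zero : ∀ f ∈ F, ∀ β ∈ f.support, f.coeff β x ≠ 0
  zerosLocallyImply : ∀ f ∈ F, f.support.Nonempty → ∀ g ∈ F, ∀ y, 0 < y →
    f.ZerosLocallyImply g (x, y)

lemma eventually_isRegularFiber (F : Set FiberSignomial) [Finite F] (hΞ : IsEndCoordinate Ξ) :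
    ∀ᶠ ξ in 𝓝[>] 0, ∀ x, 0 < x → Ξ x = ξ → IsRegularFiber F x := by
  have hcoeff (f : F) (β : f.1.support) :
      ∀ᶠ ξ in 𝓝[>] 0, ∀ x, 0 < x → Ξ x = ξ → f.1.coeff β x ≠ 0 := by
    obtain ⟨V, hV, hVf⟩ := hΞ.exists_hasLeadingTerm _ (f.1.isSignomial_coeff β β.2)
    filter_upwards [hV.eventually_ne_zero] with ξ hξ x hx hxξ
    rwa [hVf x hx, hxξ]
  have hzeros (f g : F) : ∀ᶠ ξ in 𝓝[>] 0, f.1.support.Nonempty → ∀ x, 0 < x → Ξ x = ξ →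
      ∀ y, 0 < y → f.1.ZerosLocallyImply g (x, y) :=
    eventually_imp_distrib_left.2 fun hf ↦ eventually_zerosLocallyImply hΞ hf g.1
  filter_upwards [eventually_all.2 fun f ↦ eventually_all.2 (hcoeff f),
    eventually_all.2 fun f ↦ eventually_all.2 (hzeros f)] with ξ hcoeff hzeros x hx hxξ
  exact ⟨hx, fun f hf β hβ ↦ hcoeff ⟨f, hf⟩ ⟨β, hβ⟩ x hx hxξ,
    fun f hf hne g hg ↦ hzeros ⟨f, hf⟩ ⟨g, hg⟩ hne x hx hxξ⟩

lemma eventually_signVector_eq [Finite F] (h₁ : 0 < p.1) (h₂ : 0 < p.2)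
    (hne : ∀ f ∈ F, f.support.Nonempty → f.eval p ≠ 0) :
    ∀ᶠ q in 𝓝 p, signVector F q = signVector F p := by
  have hsign (f : F) : ∀ᶠ q in 𝓝 p, signVector F q f = signVector F p f := by
    obtain hf | hf := f.1.support.eq_empty_or_nonempty
    · exact .of_forall fun q ↦ by simp only [signVector, eval_of_support_eq_empty hf]
    · exact eventually_sign_eq (f.1.continuousAt_eval h₁ h₂) (hne f f.2 hf)
  filter_upwards [eventually_all.2 hsign] with q hq using funext hq

namespace IsRegularFiber

lemma eventually_signVector_eq_of_eval_eq_zero [Finite F] (hx : IsRegularFiber F x) (hy : 0 < y)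
    (hfF : f ∈ F) (hf : f.support.Nonempty) (hf0 : f.eval (x, y) = 0) :
    ∀ᶠ p in 𝓝 (x, y), f.eval p = 0 → signVector F p = signVector F (x, y) := by
  have hsign (g : F) : ∀ᶠ p in 𝓝 (x, y),
      f.eval p = 0 → signVector F p g = signVector F (x, y) g := by
    by_cases hg0 : g.1.eval (x, y) = 0
    · filter_upwards [hx.zerosLocallyImply f hfF hf g g.2 y hy hf0 hg0] with p hp h
      rw [signVector, signVector, hp h, hg0]
    · filter_upwards [eventually_sign_eq (g.1.continuousAt_eval (p := (x, y)) hx.pos hy) hg0]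
        with p hp _ using hp
  filter_upwards [eventually_all.2 hsign] with p hp h using funext fun g ↦ hp g h

lemma eventually_signVector_eq_of_eval_ne_zero [Finite F] (hx : IsRegularFiber F x) (hy : 0 < y)
    (hfF : f ∈ F) (hf0 : f.eval (x, y) = 0) :
    ∀ᶠ p in 𝓝 (x, y), f.eval p ≠ 0 → ∀ᶠ q in 𝓝 p, signVector F q = signVector F p := by
  have hne (g : F) : ∀ᶠ p in 𝓝 (x, y), f.eval p ≠ 0 → g.1.support.Nonempty → g.1.eval p ≠ 0 := by
    by_cases hg : g.1.support.Nonempty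
    · by_cases hg0 : g.1.eval (x, y) = 0
      · filter_upwards [hx.zerosLocallyImply g g.2 hg f hfF y hy hg0 hf0] with p hp hfp _
        exact mt hp hfp
      · filter_upwards [(g.1.continuousAt_eval (p := (x, y)) hx.pos hy).eventually_ne hg0]
          with p hp _ _ using hp
    · exact .of_forall fun p _ h ↦ absurd h hg
  filter_upwards [eventually_all.2 hne, continuousAt_fst.eventually_const_lt hx.pos,
    continuousAt_snd.eventually_const_lt hy] with p hp h₁ h₂ hfp
  exact eventually_signVector_eq h₁ h₂ fun g hg ↦ hp ⟨g, hg⟩ hfp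

/- Among the members of `F` vanishing at the point, one with the fewest terms is a simple zero. -/
lemma exists_simple_zero (hF : IsDerivClosed F) (hx : IsRegularFiber F x) (hy : 0 < y)
    (hzero : ∃ f ∈ F, f.support.Nonempty ∧ f.eval (x, y) = 0) :
    ∃ f ∈ F, f.support.Nonempty ∧ f.eval (x, y) = 0 ∧ f.fiberDeriv.eval (x, y) ≠ 0 := by
  obtain ⟨f, ⟨hfF, hf, hf0⟩, hmin⟩ := exists_minimalFor_of_wellFoundedLT
    (fun f : FiberSignomial ↦ f ∈ F ∧ f.support.Nonempty ∧ f.eval (x, y) = 0)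
    (fun f ↦ f.support.card) hzero
  refine ⟨f, hfF, hf, hf0, fun hd0 ↦ ?_⟩
  have hcard := f.card_support_fiberDeriv
  have hpos := Finset.card_pos.2 hf
  obtain hd | hd := f.fiberDeriv.support.eq_empty_or_nonempty
  · rw [hd, Finset.card_empty] at hcard
    obtain ⟨β, hβ⟩ := Finset.card_eq_one.1 (show f.support.card = 1 by lia)
    rw [eval, hβ, Finset.sum_singleton] at hf0
    exact mul_ne_zero (hx.coeff_ne_zero f hfF β (by simp [hβ])) (Real.rpow_pos_of_pos hy β).ne' hf0
  · have hle : f.support.card ≤ f.fiberDeriv.support.card :=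
      hmin ⟨hF f hfF hf, hd, hd0⟩ (by simp only [hcard]; lia)
    lia

lemma eventually_signVector_mem [Finite F] (hF : IsDerivClosed F) (hx : IsRegularFiber F x)
    (hy : 0 < y) :
    (∀ᶠ x' in 𝓝 x, signVector F (x, y) ∈ fiberSignVectors F x') ∧
      ∀ᶠ p in 𝓝 (x, y), signVector F p ∈ fiberSignVectors F x := by
  by_cases hzero : ∃ f ∈ F, f.support.Nonempty ∧ f.eval (x, y) = 0
  · obtain ⟨f, hfF, hf, hf0, hd0⟩ := exists_simple_zero hF hx hy hzero
    set c := f.fiberDeriv.eval (x, y)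
    let φ (p : ℝ × ℝ) : ℝ := c * f.normalized p
    have h₁ : ∀ᶠ p : ℝ × ℝ in 𝓝 (x, y), 0 < p.1 := continuousAt_fst.eventually_const_lt hx.pos
    have h₂ : ∀ᶠ p : ℝ × ℝ in 𝓝 (x, y), 0 < p.2 := continuousAt_snd.eventually_const_lt hy
    have hφ {p : ℝ × ℝ} (hp : 0 < p.2) : φ p = 0 ↔ f.eval p = 0 := by
      rw [mul_eq_zero, or_iff_right hd0, f.normalized_eq_zero_iff hp]
    have hφ0 : φ (x, y) = 0 := (hφ hy).2 hf0
    have hσ0 : ∀ᶠ p in 𝓝 (x, y), φ p = 0 → signVector F p = signVector F (x, y) := by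
      filter_upwards [h₂, hx.eventually_signVector_eq_of_eval_eq_zero hy hfF hf hf0] with p hp h
        using h ∘ (hφ hp).1
    have hσ : ∀ᶠ p in 𝓝 (x, y), φ p ≠ 0 → ∀ᶠ q in 𝓝 p, signVector F q = signVector F p := by
      filter_upwards [h₂, hx.eventually_signVector_eq_of_eval_ne_zero hy hfF hf0] with p hp h
        using h ∘ (hφ hp).not.1
    have hcont : ∀ᶠ p in 𝓝 (x, y), ContinuousAt φ p := by
      filter_upwards [h₁, h₂] with p h₁ h₂ using (f.continuousAt_normalized h₁ h₂).const_mul c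
    have hderiv : ∀ᶠ p in 𝓝 (x, y), ∃ d > 0, HasDerivAt (fun t ↦ φ (p.1, t)) d p.2 := by
      have hpos : ∀ᶠ p in 𝓝 (x, y), 0 < c * f.fiberDeriv.eval p :=
        ((f.fiberDeriv.continuousAt_eval (p := (x, y)) hx.pos hy).const_mul c).eventually_const_lt
          (mul_self_pos.2 hd0)
      filter_upwards [h₂, hpos] with p h₂ hpos
      refine ⟨_, ?_, (f.hasDerivAt_normalized p.1 h₂).const_mul c⟩
      rw [mul_left_comm]
      exact mul_pos (inv_pos.2 h₂) hpos
    exact ⟨eventually_exists_eq_of_strictMono hy hφ0 hσ0 hcont hderiv,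
      eventually_exists_eq_fiber_of_strictMono hy hφ0 hσ0 hσ hcont hderiv⟩
  · push Not at hzero
    have hconst := eventually_signVector_eq (p := (x, y)) hx.pos hy hzero
    refine ⟨?_, hconst.mono fun p hp ↦ ⟨y, hy, hp.symm⟩⟩
    exact ((Continuous.prodMk_left y).continuousAt.eventually hconst).mono fun x' h ↦ ⟨y, hy, h⟩

end IsRegularFiber

lemma exists_eventually_sign_eval_eq_nhdsGT_zero (hx : 0 < x)
    (hf : ∀ β ∈ f.support, f.coeff β x ≠ 0) :
    ∃ s, ∀ᶠ p in 𝓝 x ×ˢ 𝓝[>] 0, SignType.sign (f.eval p) = s := by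
  obtain hne | hne := f.support.eq_empty_or_nonempty
  · exact ⟨0, .of_forall fun p ↦ by rw [eval_of_support_eq_empty hne, sign_zero]⟩
  have hlim : Tendsto (fun p : ℝ × ℝ ↦
      ∑ β ∈ f.support, f.coeff β p.1 * p.2 ^ (β - f.lowestExponent)) (𝓝 x ×ˢ 𝓝[>] 0)
      (𝓝 (∑ β ∈ f.support, f.coeff β x * 0 ^ (β - f.lowestExponent))) := by
    refine tendsto_finsetSum _ fun β hβ ↦ .mul ?_ ?_
    · exact ((f.isSignomial_coeff β hβ).analyticAt hx).continuousAt.tendsto.comp tendsto_fst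
    · have hcont := Real.continuousAt_rpow_const 0 (β - f.lowestExponent)
        (.inr (sub_nonneg.2 (lowestExponent_le hβ)))
      exact (hcont.mono_left nhdsWithin_le_nhds).comp tendsto_snd
  rw [Finset.sum_eq_single_of_mem _ (lowestExponent_mem hne) fun β _ hβ ↦ by
    rw [Real.zero_rpow (sub_ne_zero.2 hβ), mul_zero], sub_self, Real.rpow_zero, mul_one] at hlim
  refine ⟨SignType.sign (f.coeff f.lowestExponent x), ?_⟩
  filter_upwards [eventually_sign_eq hlim (hf _ (lowestExponent_mem hne)),
    tendsto_snd.eventually self_mem_nhdsWithin] with p hp hp₂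
  rwa [← f.normalized_eq_sum hp₂, f.sign_normalized hp₂] at hp

lemma exists_eventually_sign_eval_eq_atTop (hx : 0 < x)
    (hf : ∀ β ∈ f.support, f.coeff β x ≠ 0) :
    ∃ s, ∀ᶠ p in 𝓝 x ×ˢ atTop, SignType.sign (f.eval p) = s := by
  obtain ⟨s, hs⟩ := exists_eventually_sign_eval_eq_nhdsGT_zero (f := f.reflect) hx
    (by simpa [reflect] using hf)
  have hlim : Tendsto (fun p : ℝ × ℝ ↦ (p.1, p.2⁻¹)) (𝓝 x ×ˢ atTop) (𝓝 x ×ˢ 𝓝[>] 0) :=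
    tendsto_fst.prodMk (tendsto_inv_atTop_nhdsGT_zero.comp tendsto_snd)
  refine ⟨s, ?_⟩
  filter_upwards [hlim.eventually hs, tendsto_snd.eventually (eventually_gt_atTop 0)] with p hp hp₂
  rwa [eval_reflect _ _ hp₂] at hp

lemma exists_mem_eventually_forall_signVector_mem [Finite F] {l : Filter ℝ} [l.NeBot]
    (hl : ∀ᶠ y in l, 0 < y)
    (hend : ∀ f ∈ F, ∃ s, ∀ᶠ p in 𝓝 x ×ˢ l, SignType.sign (f.eval p) = s) :
    ∃ U ∈ l, ∀ᶠ x' in 𝓝 x, ∀ y ∈ U, signVector F (x', y) ∈ fiberSignVectors F x := by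
  choose! σ hσ using hend
  have hσ : ∀ᶠ p in 𝓝 x ×ˢ l, signVector F p = fun f : F ↦ σ f := by
    filter_upwards [eventually_all.2 fun f : F ↦ hσ f f.2] with p hp using funext hp
  obtain ⟨V, hV, U, hU, hσ⟩ := eventually_prod_iff.1 (hσ.and (tendsto_snd.eventually hl))
  obtain ⟨y₀, hy₀⟩ := hU.exists
  refine ⟨{y | U y}, hU, hV.mono fun x' hx' y hy ↦ ⟨y₀, (hσ hx' hy₀).2, ?_⟩⟩
  rw [(hσ hV.self_of_nhds hy₀).1, (hσ hx' hy).1]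

lemma IsRegularFiber.eventually_fiberSignVectors_eq [Finite F] (hF : IsDerivClosed F)
    (hx : IsRegularFiber F x) : ∀ᶠ x' in 𝓝 x, fiberSignVectors F x' = fiberSignVectors F x := by
  have hsup : ∀ᶠ x' in 𝓝 x, ∀ σ ∈ fiberSignVectors F x, σ ∈ fiberSignVectors F x' := by
    refine (eventually_all_finite (toFinite _)).2 ?_
    rintro _ ⟨y, hy, rfl⟩
    exact (eventually_signVector_mem hF hx hy).1
  obtain ⟨U, hU, hbot⟩ := exists_mem_eventually_forall_signVector_mem (l := 𝓝[>] 0)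
    self_mem_nhdsWithin fun f hf ↦
      exists_eventually_sign_eval_eq_nhdsGT_zero hx.pos (hx.coeff_ne_zero f hf)
  obtain ⟨V, hV, htop⟩ := exists_mem_eventually_forall_signVector_mem (eventually_gt_atTop 0)
    fun f hf ↦ exists_eventually_sign_eval_eq_atTop hx.pos (hx.coeff_ne_zero f hf)
  obtain ⟨a, ha, haU⟩ := mem_nhdsGT_iff_exists_Ioc_subset.1 hU
  obtain ⟨b, hbV⟩ := mem_atTop_sets.1 hV
  have hmid : ∀ᶠ x' in 𝓝 x, ∀ y ∈ Icc a b, signVector F (x', y) ∈ fiberSignVectors F x :=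
    isCompact_Icc.eventually_forall_of_forall_eventually fun y hy ↦
      (eventually_signVector_mem hF hx (ha.trans_le hy.1)).2
  filter_upwards [hsup, hbot, hmid, htop] with x' hsup hbot hmid htop
  refine Subset.antisymm ?_ hsup
  rintro _ ⟨y, hy, rfl⟩
  obtain hya | hay := le_or_gt y a
  · exact hbot y (haU ⟨hy, hya⟩)
  obtain hyb | hby := le_or_gt y b
  · exact hmid y ⟨hay.le, hyb⟩
  · exact htop y (hbV y hby.le)

lemma fiberSignVectors_eq_of_isPreconnected [Finite F] (hF : IsDerivClosed F) {I : Set ℝ}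
    (hI : IsPreconnected I) (hreg : ∀ x ∈ I, IsRegularFiber F x) {x₁ x₂ : ℝ} (hx₁ : x₁ ∈ I)
    (hx₂ : x₂ ∈ I) : fiberSignVectors F x₁ = fiberSignVectors F x₂ :=
  eq_of_isPreconnected_of_eventually_eq hI (fun x hx ↦ eventually_nhdsWithin_of_eventually_nhds <|
    (hreg x hx).eventually_fiberSignVectors_eq hF) hx₁ hx₂

end FiberSignomial

/-! ### Generalized polynomials and bridges -/

section GenPoly

/-- The monomial `x ^ α₁ * y ^ α₂` on the quadrant. -/
def quadrantMonomial (α : ℝ × ℝ) (z : PQ) : ℝ := z.1.1 ^ α.1 * z.1.2 ^ α.2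

/-- The vector space of generalized polynomial functions. -/
def genPoly : Submodule ℝ (PQ → ℝ) := Submodule.span ℝ (range quadrantMonomial)

variable {a : PQ → ℝ}

lemma quadrantMonomial_mem_genPoly (α : ℝ × ℝ) : quadrantMonomial α ∈ genPoly :=
  Submodule.subset_span ⟨α, rfl⟩

lemma isGenPoly_iff_mem_genPoly : IsGenPoly a ↔ a ∈ genPoly := by
  constructor
  · rintro ⟨m, c, α, -, -, h⟩
    have ha : a = ∑ i, c i • quadrantMonomial (α i) := by
      ext z
      simp only [h z, Finset.sum_apply, Pi.smul_apply, smul_eq_mul, quadrantMonomial, mul_assoc]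
    rw [ha]
    exact sum_mem fun i _ ↦ genPoly.smul_mem _ (quadrantMonomial_mem_genPoly _)
  · intro ha
    obtain ⟨c, rfl⟩ := Finsupp.mem_span_range_iff_exists_finsupp.1 ha
    let e := c.support.equivFin.symm
    refine ⟨c.support.card, fun i ↦ c (e i), fun i ↦ e i,
      fun i ↦ Finsupp.mem_support_iff.1 (e i).2, Subtype.val_injective.comp e.injective, fun z ↦ ?_⟩
    rw [Finsupp.sum, ← Finset.sum_coe_sort, ← Equiv.sum_comp e, Finset.sum_apply]
    simp only [Pi.smul_apply, smul_eq_mul, quadrantMonomial, mul_assoc]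

lemma rpow_snd_mul_mem_genPoly (s : ℝ) (ha : a ∈ genPoly) :
    (fun z : PQ ↦ z.1.2 ^ s * a z) ∈ genPoly := by
  let T : (PQ → ℝ) →ₗ[ℝ] PQ → ℝ := LinearMap.mulLeft ℝ fun z ↦ z.1.2 ^ s
  have hT : genPoly ≤ genPoly.comap T := by
    refine Submodule.span_le.2 (range_subset_iff.2 fun α ↦ ?_)
    have hα : T (quadrantMonomial α) = quadrantMonomial (α.1, s + α.2) := by
      ext z
      simp only [T, LinearMap.mulLeft_apply, Pi.mul_apply, quadrantMonomial, Real.rpow_add z.2.2]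
      ring
    exact Submodule.mem_comap.2 (hα ▸ quadrantMonomial_mem_genPoly _)
  exact hT ha

lemma comp_inv_snd_mem_genPoly (ha : a ∈ genPoly) :
    (fun z : PQ ↦ a ⟨(z.1.1, z.1.2⁻¹), z.2.1, inv_pos.2 z.2.2⟩) ∈ genPoly := by
  let T : (PQ → ℝ) →ₗ[ℝ] PQ → ℝ :=
    LinearMap.funLeft ℝ ℝ fun z ↦ ⟨(z.1.1, z.1.2⁻¹), z.2.1, inv_pos.2 z.2.2⟩
  have hT : genPoly ≤ genPoly.comap T := by
    refine Submodule.span_le.2 (range_subset_iff.2 fun α ↦ ?_)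
    have hα : T (quadrantMonomial α) = quadrantMonomial (α.1, -α.2) := by
      ext z
      simp only [T, LinearMap.funLeft_apply, quadrantMonomial, Real.inv_rpow z.2.2.le,
        Real.rpow_neg z.2.2.le]
    exact Submodule.mem_comap.2 (hα ▸ quadrantMonomial_mem_genPoly _)
  exact hT ha

lemma prod_rpow_snd_mul_mem_genPoly (b : ℕ → ℝ) (n : ℕ) (ha : a ∈ genPoly) :
    (fun z : PQ ↦ (∏ k ∈ Finset.range n, 2 * (z.1.2 ^ b k / b k)) * a z) ∈ genPoly := by
  induction n generalizing a with
  | zero => simpa using ha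
  | succ n ih =>
    convert ih (genPoly.smul_mem (2 / b n) (rpow_snd_mul_mem_genPoly (b n) ha)) using 2 with z
    rw [Finset.prod_range_succ, Pi.smul_apply, smul_eq_mul]
    ring

end GenPoly

namespace FiberSignomial

variable {f : FiberSignomial} {a : PQ → ℝ} {p : ℝ × ℝ} {x y z : ℝ}

lemma eval_mem_genPoly (f : FiberSignomial) : (fun z : PQ ↦ f.eval z) ∈ genPoly := by
  have hterm (β) (hβ : β ∈ f.support) : (fun z : PQ ↦ f.coeff β z.1.1 * z.1.2 ^ β) ∈ genPoly := by
    obtain ⟨s, c, -, -, h⟩ := f.isSignomial_coeff β hβ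
    have hsum : (fun z : PQ ↦ f.coeff β z.1.1 * z.1.2 ^ β) =
        ∑ α ∈ s, c α • quadrantMonomial (α, β) := by
      ext z
      simp only [h z.1.1 z.2.1, Finset.sum_mul, Finset.sum_apply, Pi.smul_apply, smul_eq_mul,
        quadrantMonomial, mul_assoc]
    rw [hsum]
    exact sum_mem fun α _ ↦ genPoly.smul_mem _ (quadrantMonomial_mem_genPoly _)
  convert sum_mem hterm using 1
  ext z
  rw [Finset.sum_apply, eval]

lemma exists_eval_eq_of_isGenPoly (ha : IsGenPoly a) :
    ∃ f : FiberSignomial, ∀ z : PQ, f.eval z = a z := by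
  classical
  obtain ⟨m, c, α, hc, hα, h⟩ := ha
  refine ⟨⟨Finset.univ.image fun i ↦ (α i).2,
    fun β x ↦ ∑ i : {i // (α i).2 = β}, c i * x ^ (α i).1, fun β hβ ↦ ?_⟩, fun z ↦ ?_⟩
  · obtain ⟨i, -, hi⟩ := Finset.mem_image.1 hβ
    exact isSignomial_sum (fun j k hjk ↦ Subtype.ext (hα (Prod.ext hjk (j.2.trans k.2.symm))))
      ⟨⟨i, hi⟩, hc i⟩
  · rw [h z, eval, ← Finset.sum_fiberwise_of_maps_to (g := fun i ↦ (α i).2)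
      fun i hi ↦ Finset.mem_image_of_mem (fun i ↦ (α i).2) hi]
    refine Finset.sum_congr rfl fun β _ ↦ ?_
    rw [Finset.sum_mul, Finset.sum_subtype (p := fun i ↦ (α i).2 = β) _ (by simp)]
    exact Finset.sum_congr rfl fun i _ ↦ by rw [i.2]

lemma continuous_eval (f : FiberSignomial) : Continuous fun z : PQ ↦ f.eval z :=
  continuous_iff_continuousAt.2 fun z ↦
    (f.continuousAt_eval z.2.1 z.2.2).comp continuous_subtype_val.continuousAt

/-- The signs at `p` of `f` and its iterated Euler derivatives. -/
def derivSigns (f : FiberSignomial) (p : ℝ × ℝ) (l : ℕ) : SignType :=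
  SignType.sign ((fiberDeriv^[l] f).eval p)

/-- The Rolle bound for the tower of Euler derivatives of `f` as a function of its upper end point
`p`, with the signs at the lower and the upper end point replaced by arbitrary `σ` and `τ`. -/
def rolleCost (f : FiberSignomial) (σ τ : ℕ → SignType) (p : ℝ × ℝ) : ℝ :=
  p.2 ^ f.lowestExponent * towerCost f.support.card
    (fun l ↦ 2 * (p.2 ^ (fiberDeriv^[l + 1] f).lowestExponent /
      (fiberDeriv^[l + 1] f).lowestExponent)) σ τ fun l ↦ (fiberDeriv^[l] f).normalized p

lemma derivSigns_eq_sign_normalized (f : FiberSignomial) (hp : 0 < p.2) :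
    f.derivSigns p = fun l ↦ SignType.sign ((fiberDeriv^[l] f).normalized p) := by
  ext l
  rw [derivSigns, sign_normalized _ hp]

lemma rolleCost_mem_genPoly (f : FiberSignomial) (σ τ : ℕ → SignType) :
    (fun z : PQ ↦ f.rolleCost σ τ z) ∈ genPoly := by
  have hcost (l : ℕ) :
      (fun z : PQ ↦ signCost (σ l) (τ l) ((fiberDeriv^[l] f).normalized z)) ∈ genPoly := by
    unfold signCost
    split_ifs
    · exact genPoly.zero_mem
    · exact genPoly.smul_mem (τ l : ℝ) (rpow_snd_mul_mem_genPoly _ (eval_mem_genPoly _))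
  have hterm (l : ℕ) := prod_rpow_snd_mul_mem_genPoly
    (fun k ↦ (fiberDeriv^[k + 1] f).lowestExponent) l (hcost l)
  refine rpow_snd_mul_mem_genPoly _ ?_
  convert sum_mem (t := Finset.range f.support.card) fun l _ ↦ hterm l using 1
  ext z
  rw [towerCost, Finset.sum_apply]

lemma two_mul_rpow_div_nonneg (f : FiberSignomial) (hy : 0 < y) (l : ℕ) :
    0 ≤ 2 * (y ^ (fiberDeriv^[l + 1] f).lowestExponent /
      (fiberDeriv^[l + 1] f).lowestExponent) := by
  have := (f.isPowerTower_normalized 0).exponent_pos l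
  positivity

lemma rolleCost_nonpos (f : FiberSignomial) (τ : ℕ → SignType) (hp : 0 < p.2) :
    f.rolleCost (f.derivSigns p) τ p ≤ 0 := by
  rw [derivSigns_eq_sign_normalized f hp]
  exact mul_nonpos_of_nonneg_of_nonpos (Real.rpow_nonneg hp.le _)
    (towerCost_nonpos (two_mul_rpow_div_nonneg f hp) _ _ _)

lemma rolleCost_nonneg (f : FiberSignomial) (σ : ℕ → SignType) (hp : 0 < p.2) :
    0 ≤ f.rolleCost σ (f.derivSigns p) p := by
  rw [derivSigns_eq_sign_normalized f hp]
  exact mul_nonneg (Real.rpow_nonneg hp.le _)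
    (towerCost_nonneg (two_mul_rpow_div_nonneg f hp) _ _ _)

lemma abs_eval_le_rolleCost (f : FiberSignomial) (hz : 0 < z) (hzy : z ≤ y)
    (hzero : ∃ t ∈ Icc z y, f.eval (x, t) = 0) :
    |f.eval (x, y)| ≤ f.rolleCost (f.derivSigns (x, z)) (f.derivSigns (x, y)) (x, y) := by
  have hy : 0 < y := hz.trans_le hzy
  obtain ⟨t, ht, hft⟩ := hzero
  have hbound := (f.isPowerTower_normalized x).abs_le_rolleBound hz hzy
    ⟨t, ht, (f.normalized_eq_zero_iff (p := (x, t)) (hz.trans_le ht.1)).2 hft⟩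
  rw [derivSigns_eq_sign_normalized (p := (x, z)) f hz,
    derivSigns_eq_sign_normalized (p := (x, y)) f hy,
    ← f.rpow_lowestExponent_mul_normalized (p := (x, y)) hy, abs_mul,
    abs_of_pos (Real.rpow_pos_of_pos hy _)]
  exact mul_le_mul_of_nonneg_left hbound (Real.rpow_nonneg hy.le _)

/-- The signs at `p` of the iterated Euler derivatives of `f` and of its reflection. -/
def signature (f : FiberSignomial) (p : ℝ × ℝ) : (ℕ → SignType) × (ℕ → SignType) :=
  (f.derivSigns p, f.reflect.derivSigns (p.1, p.2⁻¹))

/-- A two-sided version of `rolleCost`: the Rolle bounds from below and, through the reflection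
`y ↦ y⁻¹`, from above are added. It separates points of a fibre with signatures `σ` and `τ`. -/
def bridge (f : FiberSignomial) (σ τ : (ℕ → SignType) × (ℕ → SignType)) (p : ℝ × ℝ) : ℝ :=
  f.rolleCost σ.1 τ.1 p + f.reflect.rolleCost σ.2 τ.2 (p.1, p.2⁻¹)

lemma bridge_mem_genPoly (f : FiberSignomial) (σ τ : (ℕ → SignType) × (ℕ → SignType)) :
    (fun z : PQ ↦ f.bridge σ τ z) ∈ genPoly :=
  genPoly.add_mem (rolleCost_mem_genPoly _ _ _)
    (comp_inv_snd_mem_genPoly (rolleCost_mem_genPoly f.reflect _ _))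

lemma bridge_nonpos (f : FiberSignomial) (τ : (ℕ → SignType) × (ℕ → SignType)) (hp : 0 < p.2) :
    f.bridge (f.signature p) τ p ≤ 0 :=
  add_nonpos (f.rolleCost_nonpos _ hp) (f.reflect.rolleCost_nonpos _ (inv_pos.2 hp))

lemma bridge_nonneg (f : FiberSignomial) (σ : (ℕ → SignType) × (ℕ → SignType)) (hp : 0 < p.2) :
    0 ≤ f.bridge σ (f.signature p) p :=
  add_nonneg (f.rolleCost_nonneg _ hp) (f.reflect.rolleCost_nonneg _ (inv_pos.2 hp))

lemma abs_eval_le_bridge (f : FiberSignomial) (hz : 0 < z) (hy : 0 < y)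
    (hzero : ∃ t ∈ uIcc z y, f.eval (x, t) = 0) :
    |f.eval (x, y)| ≤ f.bridge (f.signature (x, z)) (f.signature (x, y)) (x, y) := by
  obtain ⟨t, ht, hft⟩ := hzero
  obtain hzy | hyz := le_total z y
  · rw [uIcc_of_le hzy] at ht
    exact le_add_of_le_of_nonneg (f.abs_eval_le_rolleCost hz hzy ⟨t, ht, hft⟩)
      (f.reflect.rolleCost_nonneg _ (inv_pos.2 hy))
  · rw [uIcc_of_ge hyz] at ht
    have ht0 : 0 < t := hy.trans_le ht.1
    rw [← f.eval_reflect x ht0] at hft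
    rw [← f.eval_reflect x hy]
    exact le_add_of_nonneg_of_le (f.rolleCost_nonneg _ hy)
      (f.reflect.abs_eval_le_rolleCost (inv_pos.2 hz) (inv_anti₀ hy hyz)
        ⟨t⁻¹, ⟨inv_anti₀ ht0 ht.2, inv_anti₀ hy ht.1⟩, hft⟩)

end FiberSignomial

lemma IsGenPoly.continuous {a : PQ → ℝ} (ha : IsGenPoly a) : Continuous a := by
  obtain ⟨f, hf⟩ := FiberSignomial.exists_eval_eq_of_isGenPoly ha
  exact f.continuous_eval.congr hf

/-! ### Comparing the pieces of a continuous function along a fibre -/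

section Chains

lemma sub_le_length_mul_of_walk {V : Type*} {G : SimpleGraph V} {φ : V → ℝ} {S : ℝ}
    (hφ : ∀ i j, G.Adj i j → φ i - φ j ≤ S) {i j : V} (p : G.Walk i j) :
    φ i - φ j ≤ p.length * S := by
  induction p with
  | nil => simp
  | cons hadj p ih =>
    have := hφ _ _ hadj
    rw [SimpleGraph.Walk.length_cons]
    push_cast
    linarith

variable {ι X : Type*} [TopologicalSpace X] {C : Set X} {g : ι → X → ℝ} {h : X → ℝ} {x y : X}
  {i j : ι}

/-- The graph on the pieces `g i`, in which two pieces are joined when they meet in `C`. -/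
def meetingGraph (g : ι → X → ℝ) (C : Set X) : SimpleGraph ι :=
  SimpleGraph.fromRel fun i j ↦ ∃ x ∈ C, g i x = g j x

lemma reachable_meetingGraph [Finite ι] (hC : IsPreconnected C) (hg : ∀ i, ContinuousOn (g i) C)
    (hh : ContinuousOn h C) (hcover : ∀ x ∈ C, ∃ i, h x = g i x) (hx : x ∈ C) (hy : y ∈ C)
    (hxi : h x = g i x) (hyj : h y = g j y) : (meetingGraph g C).Reachable i j := by
  by_contra hij
  let R : Set ι := {k | (meetingGraph g C).Reachable i k}
  have hclosed (T : Set ι) : IsClosed (⋃ k ∈ T, {z : C | h z = g k z}) :=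
    T.toFinite.isClosed_biUnion fun k _ ↦
      isClosed_eq (continuousOn_iff_continuous_domRestrict.1 hh)
        (continuousOn_iff_continuous_domRestrict.1 (hg k))
  have := Subtype.preconnectedSpace hC
  obtain ⟨z, -, hzR, hzR'⟩ := isPreconnected_closed_iff.1 isPreconnected_univ _ _ (hclosed R)
    (hclosed Rᶜ) (fun z _ ↦ by
      obtain ⟨k, hk⟩ := hcover z z.2
      exact (em (k ∈ R)).imp (mem_biUnion · hk) (mem_biUnion · hk))
    ⟨⟨x, hx⟩, trivial, mem_biUnion (show i ∈ R from .refl _) hxi⟩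
    ⟨⟨y, hy⟩, trivial, mem_biUnion (show j ∈ Rᶜ from hij) hyj⟩
  obtain ⟨a, ha, hza⟩ := mem_iUnion₂.1 hzR
  obtain ⟨b, hb, hzb⟩ := mem_iUnion₂.1 hzR'
  have hadj : (meetingGraph g C).Adj a b := (SimpleGraph.fromRel_adj _ _ _).2
    ⟨fun hab ↦ hb (hab ▸ ha), .inl ⟨z, z.2, hza.symm.trans hzb⟩⟩
  exact hb (SimpleGraph.Reachable.trans ha hadj.reachable)

/-- Moving along `C` from `x` to `y`, the function `h` switches pieces only where they meet, and a
shortest such chain of switches visits each piece at most once. -/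
lemma sub_le_card_mul_of_isPreconnected [Fintype ι] (hC : IsPreconnected C)
    (hg : ∀ i, ContinuousOn (g i) C) (hh : ContinuousOn h C) (hcover : ∀ x ∈ C, ∃ i, h x = g i x)
    (hx : x ∈ C) (hy : y ∈ C) (hxi : h x = g i x) (hyj : h y = g j y) {φ : ι → ℝ} {S : ℝ}
    (hS : 0 ≤ S) (hφ : ∀ i j, (∃ x ∈ C, g i x = g j x) → φ i - φ j ≤ S) :
    φ i - φ j ≤ Fintype.card ι * S := by
  obtain ⟨p, hp⟩ := (reachable_meetingGraph hC hg hh hcover hx hy hxi hyj).exists_isPath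
  have hadj (a b : ι) (hab : (meetingGraph g C).Adj a b) : φ a - φ b ≤ S := by
    obtain ⟨z, hz, h⟩ | ⟨z, hz, h⟩ := ((SimpleGraph.fromRel_adj _ _ _).1 hab).2
    exacts [hφ a b ⟨z, hz, h⟩, hφ a b ⟨z, hz, h.symm⟩]
  exact (sub_le_length_mul_of_walk hadj p).trans
    (mul_le_mul_of_nonneg_right (mod_cast hp.length_lt.le) hS)

end Chains

/-- The vertical segment in the quadrant between the heights of `w` and `z`, over the abscissa
of `z`. -/
def verticalSegment (w z : PQ) : Set PQ := {q | q.1.1 = z.1.1 ∧ q.1.2 ∈ uIcc w.1.2 z.1.2}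

lemma isPreconnected_verticalSegment (w z : PQ) : IsPreconnected (verticalSegment w z) := by
  refine Topology.IsInducing.subtypeVal.isPreconnected_image.1 ?_
  convert (isPreconnected_singleton (x := z.1.1)).prod (isPreconnected_uIcc (a := w.1.2)
    (b := z.1.2)) using 1
  ext q
  refine ⟨fun ⟨_, hr, hrq⟩ ↦ hrq ▸ hr, fun hq ↦ ⟨⟨q, ?_, ?_⟩, hq, rfl⟩⟩
  · rw [hq.1]
    exact z.2.1
  · exact (lt_min w.2.2 z.2.2).trans_le hq.2.1

section Separation

variable {ι : Type*} {f : ι × ι → FiberSignomial} {g : ι → PQ → ℝ} {h : PQ → ℝ} {w z : PQ}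

/-- The signatures at `z` of a family of fibre signomials. -/
def signatures (f : ι × ι → FiberSignomial) (z : PQ) (p : ι × ι) :
    (ℕ → SignType) × (ℕ → SignType) :=
  (f p).signature z

/-- The bridges of all the differences `f (i, j)` of two pieces, added up once for each possible
switch of pieces. -/
def totalBridge [Fintype ι] (f : ι × ι → FiberSignomial)
    (σ τ : ι × ι → (ℕ → SignType) × (ℕ → SignType)) (z : PQ) : ℝ :=
  Fintype.card ι * ∑ p, (f p).bridge (σ p) (τ p) z

variable [Fintype ι]

lemma totalBridge_mem_genPoly (f : ι × ι → FiberSignomial)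
    (σ τ : ι × ι → (ℕ → SignType) × (ℕ → SignType)) : totalBridge f σ τ ∈ genPoly := by
  have hsum : (∑ p, fun z : PQ ↦ (f p).bridge (σ p) (τ p) z) ∈ genPoly :=
    sum_mem fun p _ ↦ (f p).bridge_mem_genPoly _ _
  convert genPoly.smul_mem (Fintype.card ι : ℝ) hsum using 1
  ext z
  simp only [totalBridge, Pi.smul_apply, Finset.sum_apply, smul_eq_mul]

lemma totalBridge_nonpos (f : ι × ι → FiberSignomial)
    (τ : ι × ι → (ℕ → SignType) × (ℕ → SignType)) (z : PQ) :
    totalBridge f (signatures f z) τ z ≤ 0 :=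
  mul_nonpos_of_nonneg_of_nonpos (Nat.cast_nonneg _)
    (Finset.sum_nonpos fun p _ ↦ (f p).bridge_nonpos _ z.2.2)

lemma sub_le_totalBridge (hf : ∀ p, ∀ z : PQ, (f p).eval z = g p.1 z - g p.2 z)
    (hg : ∀ i, Continuous (g i)) (hh : Continuous h) (hcover : ∀ z, ∃ i, h z = g i z)
    (hwz : w.1.1 = z.1.1) {i j : ι} (hwi : h w = g i w) (hzj : h z = g j z) :
    g i z - g j z ≤ totalBridge f (signatures f w) (signatures f z) z := by
  have hnonneg (p : ι × ι) :
      0 ≤ (f p).bridge (signatures f w p) (signatures f z p) z := (f p).bridge_nonneg _ z.2.2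
  refine sub_le_card_mul_of_isPreconnected (φ := fun i ↦ g i z)
    (isPreconnected_verticalSegment w z) (fun i ↦ (hg i).continuousOn) hh.continuousOn
    (fun z _ ↦ hcover z) ⟨hwz, left_mem_uIcc⟩ ⟨rfl, right_mem_uIcc⟩ hwi hzj
    (Finset.sum_nonneg fun p _ ↦ hnonneg p) fun a b ⟨q, hq, hab⟩ ↦ ?_
  have hzero : (f (a, b)).eval (z.1.1, q.1.2) = 0 := by
    rw [← hq.1, hf (a, b) q, hab, sub_self]
  have hbridge := (f (a, b)).abs_eval_le_bridge w.2.2 z.2.2 ⟨q.1.2, hq.2, hzero⟩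
  rw [show (z.1.1, w.1.2) = w.1 from Prod.ext hwz.symm rfl, Prod.mk.eta, hf (a, b) z] at hbridge
  exact (le_abs_self _).trans (hbridge.trans
    (Finset.single_le_sum (fun p _ ↦ hnonneg p) (Finset.mem_univ (a, b))))

end Separation

section SupInf

variable {K : Type*} [Finite K] [Nonempty K]

lemma exists_isSupInf_eq_of_saddle {e : K → K → PQ → ℝ} (he : ∀ k k', IsGenPoly (e k k')) :
    ∃ d, IsSupInf d ∧ ∀ z v k, (∀ k', v ≤ e k k' z) → (∀ k', e k' k z ≤ v) → d z = v := by
  cases nonempty_fintype K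
  obtain ⟨J, hJ⟩ := Nat.exists_eq_succ_of_ne_zero (Fintype.card_ne_zero (α := K))
  let q : K ≃ Fin (J + 1) := Fintype.equivFinOfCardEq hJ
  refine ⟨fun z ↦ ⨆ j, ⨅ k, e (q.symm j) (q.symm k) z,
    ⟨J, fun _ ↦ J, fun j k ↦ e (q.symm j) (q.symm k), fun j k ↦ he _ _, fun _ ↦ rfl⟩,
    fun z v k hrow hcol ↦ le_antisymm (ciSup_le fun j ↦ ?_) ?_⟩
  · refine (ciInf_le (finite_range _).bddBelow (q k)).trans ?_
    rw [q.symm_apply_apply]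
    exact hcol _
  · refine le_ciSup_of_le (finite_range _).bddAbove (q k) (le_ciInf fun j ↦ ?_)
    rw [q.symm_apply_apply]
    exact hrow _

variable {ι κ : Type*} [Finite ι] {f : ι × ι → FiberSignomial} {g : ι → PQ → ℝ} {h : PQ → ℝ}
  {s : PQ → κ} {r : K → PQ} {I : Set ℝ}

/-- The sup-inf expression subtracts from the piece valid at `r k` the bridges to each `r k'`; at a
point of the same type as `r k` this is a saddle point. -/
lemma exists_isSupInf_eqOn_strip (hf : ∀ p, ∀ z : PQ, (f p).eval z = g p.1 z - g p.2 z)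
    (hg : ∀ i, IsGenPoly (g i)) (hh : Continuous h)
    (hcover : ∀ z, ∃ i, h z = g i z) (hpiece : ∀ i, (fun z ↦ h z = g i z).FactorsThrough s)
    (hsig : (signatures f).FactorsThrough s)
    (hr : ∀ z : PQ, z.1.1 ∈ I →
      (∃ k, s (r k) = s z) ∧ ∀ k, ∃ w : PQ, w.1.1 = z.1.1 ∧ s w = s (r k)) :
    ∃ d, IsSupInf d ∧ ∀ z : PQ, z.1.1 ∈ I → d z = h z := by
  cases nonempty_fintype ι
  choose idx hidx using fun k ↦ hcover (r k)
  let e (k k' : K) (z : PQ) : ℝ :=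
    g (idx k) z - totalBridge f (signatures f (r k)) (signatures f (r k')) z
  have he (k k' : K) : IsGenPoly (e k k') := isGenPoly_iff_mem_genPoly.2
    (genPoly.sub_mem (isGenPoly_iff_mem_genPoly.1 (hg _)) (totalBridge_mem_genPoly _ _ _))
  obtain ⟨d, hd, hdv⟩ := exists_isSupInf_eq_of_saddle he
  refine ⟨d, hd, fun z hz ↦ ?_⟩
  obtain ⟨⟨k, hk⟩, hfiber⟩ := hr z hz
  have hzk : h z = g (idx k) z := (hpiece _ hk).mp (hidx k)
  refine hdv z _ k (fun k' ↦ ?_) fun k' ↦ ?_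
  · have := totalBridge_nonpos f (signatures f (r k')) z
    simp only [e, hsig hk, hzk]
    linarith
  · obtain ⟨w, hwz, hw⟩ := hfiber k'
    have hwk : h w = g (idx k') w := (hpiece _ hw).mpr (hidx k')
    have := sub_le_totalBridge hf (fun i ↦ (hg i).continuous) hh hcover hwz hwk hzk
    simp only [e, hsig hk, ← hsig hw]
    linarith

end SupInf

/-! ### Sign determination -/

namespace FiberSignomial

variable {F F' : Set FiberSignomial} {f : FiberSignomial} {α : Type*} {u : PQ → α} {S : Set PQ}

/-- On the quadrant, `u` depends only on the signs of the members of `F`. -/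
def IsSignDetermined (F : Set FiberSignomial) (u : PQ → α) : Prop :=
  u.FactorsThrough fun z ↦ signVector F z

lemma IsSignDetermined.mono (hu : IsSignDetermined F u) (hF : F ⊆ F') : IsSignDetermined F' u :=
  fun _ _ h ↦ hu (funext fun f ↦ congrFun h ⟨f, hF f.2⟩)

lemma isSignDetermined_sign_eval (hf : f ∈ F) :
    IsSignDetermined F fun z ↦ SignType.sign (f.eval z) :=
  fun _ _ h ↦ congrFun h ⟨f, hf⟩

lemma exists_finite_forall_isSignDetermined {ι : Type*} [Finite ι] {u : ι → PQ → α}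
    (hu : ∀ i, ∃ F : Set FiberSignomial, F.Finite ∧ IsSignDetermined F (u i)) :
    ∃ F : Set FiberSignomial, F.Finite ∧ ∀ i, IsSignDetermined F (u i) := by
  choose F hF hu using hu
  exact ⟨⋃ i, F i, finite_iUnion hF, fun i ↦ (hu i).mono (subset_iUnion F i)⟩

lemma exists_finite_isSignDetermined_sign {a : PQ → ℝ} (ha : IsGenPoly a) :
    ∃ F : Set FiberSignomial, F.Finite ∧ IsSignDetermined F fun z ↦ SignType.sign (a z) := by
  obtain ⟨f, hf⟩ := exists_eval_eq_of_isGenPoly ha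
  simp only [← hf]
  exact ⟨{f}, finite_singleton f, isSignDetermined_sign_eval rfl⟩

lemma exists_finite_isSignDetermined_mem_of_isBasicGSA (hS : IsBasicGSA S) :
    ∃ F : Set FiberSignomial, F.Finite ∧ IsSignDetermined F (· ∈ S) := by
  obtain ⟨a, K, b, ha, hb, rfl⟩ := hS
  obtain ⟨F, hF, haF⟩ := exists_finite_isSignDetermined_sign ha
  obtain ⟨F', hF', hbF'⟩ := exists_finite_forall_isSignDetermined fun k ↦
    exists_finite_isSignDetermined_sign (hb k)
  refine ⟨F ∪ F', hF.union hF', fun z z' h ↦ propext (and_congr ?_ (forall_congr' fun k ↦ ?_))⟩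
  · have hsign : SignType.sign (a z) = SignType.sign (a z') := haF.mono subset_union_left h
    rw [← sign_eq_zero_iff, hsign, sign_eq_zero_iff]
  · have hsign : SignType.sign (b k z) = SignType.sign (b k z') :=
      (hbF' k).mono subset_union_right h
    rw [← sign_eq_one_iff, hsign, sign_eq_one_iff]

lemma exists_finite_isSignDetermined_mem_of_isGSA (hS : IsGSA S) :
    ∃ F : Set FiberSignomial, F.Finite ∧ IsSignDetermined F (· ∈ S) := by
  obtain ⟨J, T, hT, rfl⟩ := hS
  obtain ⟨F, hF, hTF⟩ := exists_finite_forall_isSignDetermined fun j ↦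
    exists_finite_isSignDetermined_mem_of_isBasicGSA (hT j)
  refine ⟨F, hF, fun z z' h ↦ ?_⟩
  simp only [mem_iUnion, fun j ↦ hTF j h]

lemma exists_finite_isSignDetermined_derivSigns (f : FiberSignomial) :
    ∃ F : Set FiberSignomial, F.Finite ∧ IsSignDetermined F fun z ↦ f.derivSigns z := by
  refine ⟨(fiberDeriv^[·] f) '' Iic f.support.card, (finite_Iic _).image _,
    fun z z' h ↦ funext fun l ↦ ?_⟩
  obtain hl | hl := le_total l f.support.card
  · exact isSignDetermined_sign_eval (mem_image_of_mem (fiberDeriv^[·] f) (mem_Iic.2 hl)) h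
  · simp only [derivSigns, eval_iterate_fiberDeriv_of_le hl]

lemma IsSignDetermined.comp_inv_snd (hu : IsSignDetermined F u) :
    IsSignDetermined (reflect '' F)
      fun z ↦ u ⟨(z.1.1, z.1.2⁻¹), z.2.1, inv_pos.2 z.2.2⟩ := fun z z' h ↦ by
  refine hu (funext fun f ↦ ?_)
  have := isSignDetermined_sign_eval (mem_image_of_mem reflect f.2) h
  simp only [signVector]
  rwa [← eval_reflect _ _ (inv_pos.2 z.2.2), ← eval_reflect _ _ (inv_pos.2 z'.2.2), inv_inv,
    inv_inv]

lemma exists_finite_isSignDetermined_signature (f : FiberSignomial) :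
    ∃ F : Set FiberSignomial, F.Finite ∧ IsSignDetermined F fun z ↦ f.signature z := by
  obtain ⟨F, hF, hfF⟩ := exists_finite_isSignDetermined_derivSigns f
  obtain ⟨F', hF', hfF'⟩ := exists_finite_isSignDetermined_derivSigns f.reflect
  exact ⟨F ∪ reflect '' F', hF.union (hF'.image _), fun z z' h ↦
    Prod.ext (hfF.mono subset_union_left h) (hfF'.comp_inv_snd.mono subset_union_right h)⟩

lemma exists_representatives [Finite F] (hF : IsDerivClosed F) {I : Set ℝ} (hI : IsPreconnected I)
    (hne : I.Nonempty) (hreg : ∀ x ∈ I, IsRegularFiber F x) :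
    ∃ (K : Type) (_ : Finite K) (_ : Nonempty K) (r : K → PQ), ∀ z : PQ, z.1.1 ∈ I →
      (∃ k, signVector F (r k) = signVector F z) ∧
        ∀ k, ∃ w : PQ, w.1.1 = z.1.1 ∧ signVector F w = signVector F (r k) := by
  obtain ⟨x₀, hx₀⟩ := hne
  choose y hy hsign using fun σ : fiberSignVectors F x₀ ↦ σ.2
  refine ⟨fiberSignVectors F x₀, inferInstance, ⟨⟨_, 1, one_pos, rfl⟩⟩,
    fun σ ↦ ⟨(x₀, y σ), (hreg x₀ hx₀).pos, hy σ⟩, fun z hz ↦ ?_⟩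
  have hconst := fiberSignVectors_eq_of_isPreconnected hF hI hreg hz hx₀
  refine ⟨⟨⟨signVector F z, hconst ▸ ⟨z.1.2, z.2.2, rfl⟩⟩, hsign _⟩, fun σ ↦ ?_⟩
  obtain ⟨t, ht, hσ⟩ := hconst.ge σ.2
  exact ⟨⟨(z.1.1, t), z.2.1, ht⟩, rfl, hσ.trans (hsign σ).symm⟩

lemma exists_finite_forall_exists_isSupInf {h : PQ → ℝ} (hc : Continuous h)
    (hpw : IsPiecewiseGenPoly h) :
    ∃ F : Set FiberSignomial, F.Finite ∧ ∀ I, IsPreconnected I → I.Nonempty →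
      (∀ x ∈ I, IsRegularFiber F x) → ∃ d, IsSupInf d ∧ ∀ z : PQ, z.1.1 ∈ I → d z = h z := by
  obtain ⟨l, g, hg, -, hgsa, hcover⟩ := hpw
  have hsub (p : Fin l × Fin l) : IsGenPoly (g p.1 - g p.2) := isGenPoly_iff_mem_genPoly.2
    (genPoly.sub_mem (isGenPoly_iff_mem_genPoly.1 (hg _)) (isGenPoly_iff_mem_genPoly.1 (hg _)))
  choose f hf using fun p ↦ exists_eval_eq_of_isGenPoly (hsub p)
  obtain ⟨F₁, hF₁, hpiece⟩ := exists_finite_forall_isSignDetermined fun i ↦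
    exists_finite_isSignDetermined_mem_of_isGSA (hgsa i)
  obtain ⟨F₂, hF₂, hsig⟩ := exists_finite_forall_isSignDetermined fun p ↦
    exists_finite_isSignDetermined_signature (f p)
  obtain ⟨F, hF, hsubset, hclosed⟩ := exists_finite_isDerivClosed (hF₁.union hF₂)
  obtain ⟨hF₁F, hF₂F⟩ := union_subset_iff.1 hsubset
  refine ⟨F, hF, fun I hI hne hreg ↦ ?_⟩
  have := hF.to_subtype
  obtain ⟨K, _, _, r, hr⟩ := exists_representatives hclosed hI hne hreg
  exact exists_isSupInf_eqOn_strip hf hg hc hcover (fun i ↦ (hpiece i).mono hF₁F)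
    (fun z z' h ↦ funext fun p ↦ (hsig p).mono hF₂F h) hr

end FiberSignomial

/-! ### Subdividing the axis -/

namespace FiberSignomial

variable {x : ℝ} {Ξ : ℝ → ℝ}

lemma eventually_isRegularFiber_of_tendsto (F : Set FiberSignomial) [Finite F]
    (hΞ : IsEndCoordinate Ξ) {l : Filter ℝ} (hl : Tendsto Ξ l (𝓝[>] 0)) :
    ∀ᶠ t in l, 0 < t → IsRegularFiber F t :=
  (hl.eventually (eventually_isRegularFiber F hΞ)).mono fun t ht ht0 ↦ ht t ht0 rfl

lemma tendsto_nhdsWithin_nhdsGT {s : Set ℝ} (hΞ : Continuous Ξ) (hx : Ξ x = 0)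
    (hs : ∀ t ∈ s, 0 < Ξ t) : Tendsto Ξ (𝓝[s] x) (𝓝[>] 0) :=
  tendsto_nhdsWithin_of_tendsto_nhds_of_eventually_within _
    ((hΞ.tendsto' x 0 hx).mono_left nhdsWithin_le_nhds) (eventually_mem_nhdsWithin.mono hs)

lemma eventually_isRegularFiber_nhdsGT (F : Set FiberSignomial) [Finite F] (hx : 0 ≤ x) :
    ∀ᶠ t in 𝓝[>] x, 0 < t → IsRegularFiber F t := by
  obtain rfl | hx := hx.eq_or_lt
  · exact eventually_isRegularFiber_of_tendsto F .id tendsto_id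
  · exact eventually_isRegularFiber_of_tendsto F (.sub_const hx)
      (tendsto_nhdsWithin_nhdsGT (by fun_prop) (sub_self x) fun t ht ↦ sub_pos.2 ht)

lemma eventually_isRegularFiber_nhdsLT (F : Set FiberSignomial) [Finite F] (hx : 0 < x) :
    ∀ᶠ t in 𝓝[<] x, 0 < t → IsRegularFiber F t :=
  eventually_isRegularFiber_of_tendsto F (.const_sub hx)
    (tendsto_nhdsWithin_nhdsGT (by fun_prop) (sub_self x) fun t ht ↦ sub_pos.2 ht)

lemma eventually_isRegularFiber_nhdsNE (F : Set FiberSignomial) [Finite F] (hx : 0 ≤ x) :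
    ∀ᶠ t in 𝓝[≠] x, 0 < t → IsRegularFiber F t := by
  rw [← nhdsLT_sup_nhdsGT, eventually_sup]
  refine ⟨?_, eventually_isRegularFiber_nhdsGT F hx⟩
  obtain rfl | hx := hx.eq_or_lt
  · exact eventually_mem_nhdsWithin.mono fun t ht ht0 ↦ absurd ht0 (lt_asymm ht)
  · exact eventually_isRegularFiber_nhdsLT F hx

lemma eventually_isRegularFiber_atTop (F : Set FiberSignomial) [Finite F] :
    ∀ᶠ t in atTop, IsRegularFiber F t := by
  filter_upwards [eventually_isRegularFiber_of_tendsto F .inv tendsto_inv_atTop_nhdsGT_zero,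
    eventually_gt_atTop 0] with t ht using ht

lemma finite_not_isRegularFiber (F : Set FiberSignomial) [Finite F] :
    {x | 0 < x ∧ ¬IsRegularFiber F x}.Finite := by
  obtain ⟨M, hM⟩ := eventually_atTop.1 (eventually_isRegularFiber_atTop F)
  by_contra hinf
  obtain ⟨x, hx, hacc⟩ := Set.Infinite.exists_accPt_of_subset_isCompact hinf isCompact_Icc
    fun t ht ↦ ⟨ht.1.le, le_of_not_ge fun hMt ↦ ht.2 (hM t hMt)⟩
  refine (accPt_iff_frequently_nhdsNE.1 hacc) ?_
  filter_upwards [eventually_isRegularFiber_nhdsNE F hx.1] with t ht ⟨ht0, hbad⟩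
  exact hbad (ht ht0)

end FiberSignomial

section Subdivision

variable {γ : ℕ → ℝ} {L p : ℕ}

lemma isPreconnected_vstrip (γ : ℕ → ℝ) (L p : ℕ) : IsPreconnected (vstrip γ L p) := by
  unfold vstrip
  split_ifs
  exacts [isPreconnected_Ioi, isPreconnected_Ioo]

lemma vstrip_nonempty (hγ : StrictMonoOn γ (Iic L)) (hp : p ≤ L) : (vstrip γ L p).Nonempty := by
  unfold vstrip
  split_ifs with h
  · exact nonempty_Ioi
  · exact nonempty_Ioo.2 (hγ (mem_Iic.2 hp) (mem_Iic.2 (by lia)) p.lt_succ_self)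

lemma vstrip_subset_Ioi (γ : ℕ → ℝ) (L p : ℕ) : vstrip γ L p ⊆ Ioi (γ p) := by
  unfold vstrip
  split_ifs
  exacts [subset_rfl, Ioo_subset_Ioi_self]

lemma exists_subdivision_of_finite {Z : Set ℝ} (hZ : Z.Finite) (hpos : ∀ x ∈ Z, 0 < x) :
    ∃ (L : ℕ) (γ : ℕ → ℝ), γ 0 = 0 ∧ StrictMonoOn γ (Iic L) ∧
      ∀ p ≤ L, Disjoint (vstrip γ L p) Z := by
  lift Z to Finset ℝ using hZ
  obtain ⟨L, hL⟩ := Nat.exists_eq_succ_of_ne_zero (Finset.card_ne_zero_of_mem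
    (Finset.mem_insert_self 0 Z))
  let γ (p : ℕ) : ℝ := (insert 0 Z).orderEmbOfFin hL (Fin.ofNat _ p)
  have hγ : StrictMonoOn γ (Iic L) := fun p hp q hq hpq ↦ by
    refine (OrderEmbedding.strictMono _) ?_
    rwa [Fin.lt_def, Fin.val_ofNat, Fin.val_ofNat, Nat.mod_eq_of_lt (Nat.lt_succ_of_le hp),
      Nat.mod_eq_of_lt (Nat.lt_succ_of_le hq)]
  have hrange {x : ℝ} (hx : x ∈ insert 0 Z) : ∃ p ∈ Iic L, γ p = x := by
    rw [← Finset.mem_coe, ← Finset.range_orderEmbOfFin _ hL] at hx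
    obtain ⟨i, rfl⟩ := hx
    exact ⟨i, Nat.lt_succ_iff.1 i.2, by simp only [γ, Fin.ofNat_val_eq_self]⟩
  refine ⟨L, γ, le_antisymm ?_ ?_, hγ, fun p hp ↦ Set.disjoint_left.2 fun x hx hxZ ↦ ?_⟩
  · obtain ⟨p, hp, hp0⟩ := hrange (Finset.mem_insert_self 0 Z)
    exact hp0 ▸ hγ.monotoneOn (mem_Iic.2 L.zero_le) hp p.zero_le
  · obtain h | h := Finset.mem_insert.1 ((insert 0 Z).orderEmbOfFin_mem hL (Fin.ofNat _ 0))
    exacts [h.ge, (hpos _ h).le]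
  · obtain ⟨q, hq, rfl⟩ := hrange (Finset.mem_insert_of_mem hxZ)
    have hpq : p < q := (hγ.lt_iff_lt hp hq).1 (vstrip_subset_Ioi γ L p hx)
    rw [vstrip, if_neg (by grind)] at hx
    have := (hγ.lt_iff_lt hq (mem_Iic.2 (hpq.trans_le hq))).1 hx.2
    lia

end Subdivision

/-- One-variable methods: a continuous piecewise generalized polynomial function
agrees, on each vertical half-strip `H_p = (γ p, γ (p+1)) × (0,∞)` of a suitable
finite subdivision of the `x`-axis, with a sup of infs of finitely many
generalized polynomial functions. -/
theorem supInf_on_vertical_halfstrips (h : PQ → ℝ)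
    (hc : Continuous h) (hpw : IsPiecewiseGenPoly h) :
    ∃ (L : ℕ) (γ : ℕ → ℝ) (d : ℕ → PQ → ℝ),
      γ 0 = 0 ∧ StrictMonoOn γ (Set.Iic L) ∧
      (∀ p ≤ L, IsSupInf (d p)) ∧
      (∀ p ≤ L, ∀ z : PQ, z.1.1 ∈ vstrip γ L p → d p z = h z) := by
  obtain ⟨F, hF, hlocal⟩ := FiberSignomial.exists_finite_forall_exists_isSupInf hc hpw
  have := hF.to_subtype
  obtain ⟨L, γ, hγ0, hγ, hdisj⟩ :=
    exists_subdivision_of_finite (FiberSignomial.finite_not_isRegularFiber F) fun x hx ↦ hx.1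
  have hreg (p : ℕ) (hp : p ≤ L) (x : ℝ) (hx : x ∈ vstrip γ L p) :
      FiberSignomial.IsRegularFiber F x := by
    by_contra hbad
    have hp0 : 0 ≤ γ p := hγ0 ▸ hγ.monotoneOn (mem_Iic.2 L.zero_le) hp p.zero_le
    exact Set.disjoint_left.1 (hdisj p hp) hx
      ⟨hp0.trans_lt (vstrip_subset_Ioi γ L p hx), hbad⟩
  choose! d hd hdh using fun p hp ↦
    hlocal _ (isPreconnected_vstrip γ L p) (vstrip_nonempty hγ hp) (hreg p hp)
  exact ⟨L, γ, d, hγ0, hγ, hd, hdh⟩
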